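/- arXiv:1901.09453 — 2 statements merged into one kernel-verified Lean document; each statement's English description precedes it below -/
import Mathlib

section
/- Let X be a measurable space, D_S and D_T probability measures on X, and f_S, f_T : X → [0,1] measurable labeling functions. Let H be a countable nonempty set of measurable functions from X to [0,1] with f_S, f_T ∈ H, and let H̃ := {x ↦ sgn(|g(x) − g'(x)| − t) : g, g' ∈ H, t ∈ [0,1]} (a class of {0,1}-valued functions, assumed to admit measurable suprema, e.g. by restricting t to rationals). Fix n ≥ 1 and δ ∈ (0,1). Then with probability at least 1 − δ over independent i.i.d. samples S_S ∼ D_S^n and S_T ∼ D_T^n, for every h ∈ H: ε_{D_T}(h, f_T) ≤ ε̂_{S_S}(h, f_S) + d_{H̃}(D̂_S, D̂_T) + 2·Rad_{S_S}(H) + 2·Rad_{S_S}(H̃) + 2·Rad_{S_T}(H̃) + min{ E_{D_S}[|f_S − f_T|], E_{D_T}[|f_S − f_T|] } + 3·√(log(4/δ)/(2n)) + 6·√(log(8/δ)/(2n)), where ε̂_{S_S}(h,f_S) := (1/n)·Σ_i |h(x_i) − f_S(x_i)| and D̂_S, D̂_T are the empirical distributions of the two samples. -/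
open MeasureTheory Set
open scoped ENNReal

/-- The empirical Rademacher complexity of the class `H` w.r.t. the sample `x`:
the expectation, over i.i.d. uniform signs `σ ∈ {−1,+1}^n`, of
`sup_{h ∈ H} (1/n) ∑ i σ_i h(x_i)`.  The expectation is written as the average
over all `2^n` sign vectors (encoded as `Fin n → Bool`). -/
noncomputable def radS {X : Type*} {n : ℕ} (x : Fin n → X) (H : Set (X → ℝ)) : ℝ :=
  (∑ σ : Fin n → Bool,
    sSup ((fun h => (1 / (n : ℝ)) * ∑ i, (if σ i then (1 : ℝ) else -1) * h (x i)) '' H))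
    / 2 ^ n

/-- The H-divergence induced by a class `H` of `{0,1}`-valued functions:
`d_H(P,Q) := sup_{h ∈ H} |P({x : h(x) = 1}) − Q({x : h(x) = 1})|`. -/
noncomputable def dH {X : Type*} [MeasurableSpace X] (H : Set (X → ℝ))
    (P Q : Measure X) : ℝ :=
  sSup ((fun h => |(P {x | h x = 1}).toReal - (Q {x | h x = 1}).toReal|) '' H)

/-- The empirical distribution of the sample `ω = (x_1, …, x_n)`: the uniform
measure on the sample points. -/
noncomputable def empD {X : Type*} [MeasurableSpace X] {n : ℕ} (ω : Fin n → X) : Measure X :=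
  ((n : ℝ≥0∞))⁻¹ • ∑ i, Measure.dirac (ω i)

/-- The class `H̃ := {x ↦ sgn(|g(x) − g'(x)| − t) : g, g' ∈ H, t ∈ [0,1]}` of
`{0,1}`-valued functions, where `sgn(s) = 1` if `s > 0` and `0` otherwise. -/
def Htilde {X : Type*} (H : Set (X → ℝ)) : Set (X → ℝ) :=
  {u | ∃ g ∈ H, ∃ g' ∈ H, ∃ t ∈ Icc (0 : ℝ) 1,
    u = fun x => if t < |g x - g' x| then (1 : ℝ) else 0}

/-!
By the layer cake formula, a bound `P {t < |g - g'|} ≤ Q {t < |g - g'|} + K` for all thresholds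
`t ∈ [0, 1]` gives `E_P |g - g'| ≤ E_Q |g - g'| + K`. The threshold sets are exactly those measured
by `Htilde H`, so such bounds hold uniformly over `g, g' ∈ H`: from `DT` to the empirical target
measure by McDiarmid's inequality and symmetrization (over rational thresholds, to stay countable),
and from there to the empirical source measure by the definition of the divergence `dH`.

It remains to replace the target label `fT` by `fS`. The triangle inequality does so either under
`DT`, before passing to the source sample, or on the source sample, after it; in the second case
McDiarmid's inequality for the single function `|fS - fT|` returns to `DS`. The better of the two
routes gives the minimum.
-/

section McDiarmid

open ProbabilityTheory

/-- `G` has bounded differences `c`: changing the `i`-th coordinate raises `G` by at most `c i`.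
The bound is one-sided because changing the coordinate back gives the other side. -/
def HasBoundedDifferences {ι : Type*} [DecidableEq ι] {α : ι → Type*}
    (G : (∀ i, α i) → ℝ) (c : ι → ℝ) : Prop :=
  ∀ x i y, G (Function.update x i y) ≤ G x + c i

namespace HasBoundedDifferences

variable {ι : Type*} [DecidableEq ι] {α : ι → Type*} {G G' : (∀ i, α i) → ℝ} {c c' : ι → ℝ}

lemma le_update_add (hG : HasBoundedDifferences G c) (x : ∀ i, α i) (i : ι) (y : α i) :
    G x ≤ G (Function.update x i y) + c i := by
  simpa using hG (Function.update x i y) i (x i)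

lemma const_sub (hG : HasBoundedDifferences G c) (a : ℝ) :
    HasBoundedDifferences (fun x => a - G x) c := fun x i y => by
  linarith [hG.le_update_add x i y]

lemma sub (hG : HasBoundedDifferences G c) (hG' : HasBoundedDifferences G' c') :
    HasBoundedDifferences (fun x => G x - G' x) (fun i => c i + c' i) := fun x i y => by
  linarith [hG x i y, hG'.le_update_add x i y]

lemma const_mul (hG : HasBoundedDifferences G c) {r : ℝ} (hr : 0 ≤ r) :
    HasBoundedDifferences (fun x => r * G x) (fun i => r * c i) := fun x i y => by
  simpa only [mul_add] using mul_le_mul_of_nonneg_left (hG x i y) hr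

lemma sSup_image {κ : Type*} {s : Set κ} (hs : s.Nonempty) {G : κ → (∀ i, α i) → ℝ}
    (hG : ∀ k ∈ s, HasBoundedDifferences (G k) c)
    (hbdd : ∀ x, BddAbove ((fun k => G k x) '' s)) :
    HasBoundedDifferences (fun x => sSup ((fun k => G k x) '' s)) c := fun x i y => by
  refine csSup_le (hs.image _) (forall_mem_image.2 fun k hk => (hG k hk x i y).trans ?_)
  gcongr
  exact le_csSup (hbdd x) (mem_image_of_mem _ hk)

lemma piecewise_le_add_sum (hG : HasBoundedDifferences G c) (x y : ∀ i, α i) (s : Finset ι) :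
    G (s.piecewise x y) ≤ G y + ∑ i ∈ s, c i := by
  induction s using Finset.induction_on with
  | empty => simp
  | insert i s hi ih =>
    rw [Finset.piecewise_insert, Finset.sum_insert hi]
    linarith [hG (s.piecewise x y) i (x i)]

lemma le_add_sum [Fintype ι] (hG : HasBoundedDifferences G c) (x y : ∀ i, α i) :
    G x ≤ G y + ∑ i, c i := by
  simpa using hG.piecewise_le_add_sum x y Finset.univ

lemma integrable [Finite ι] [∀ i, MeasurableSpace (α i)] {P : Measure (∀ i, α i)}
    [IsFiniteMeasure P] (hG : HasBoundedDifferences G c) (hGm : Measurable G) :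
    Integrable G P := by
  cases nonempty_fintype ι
  rcases isEmpty_or_nonempty (∀ i, α i) with _ | ⟨⟨x₀⟩⟩
  · exact .of_isEmpty ..
  exact .of_mem_Icc (G x₀ - ∑ i, c i) (G x₀ + ∑ i, c i) hGm.aemeasurable <| .of_forall fun x =>
    ⟨by linarith [hG.le_add_sum x₀ x], hG.le_add_sum x x₀⟩

end HasBoundedDifferences

lemma hasSubgaussianMGF_prod_add {α β : Type*} [MeasurableSpace α] [MeasurableSpace β]
    {μ : Measure α} {ν : Measure β} [SFinite μ] [SFinite ν] {cX cY : NNReal} {X : α → ℝ}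
    {Y : α × β → ℝ} (hX : HasSubgaussianMGF X cX μ) (hYm : Measurable Y)
    (hY : ∀ a, HasSubgaussianMGF (fun b => Y (a, b)) cY ν) :
    HasSubgaussianMGF (fun p => X p.1 + Y p) (cX + cY) (μ.prod ν) := by
  have hinner : ∀ t a, ∫ b, Real.exp (t * (X a + Y (a, b))) ∂ν
      ≤ Real.exp (t * X a) * Real.exp (cY * t ^ 2 / 2) := fun t a => by
    simp only [mul_add, Real.exp_add, integral_const_mul]
    gcongr
    exact (hY a).mgf_le t
  have hmeas : ∀ t, AEStronglyMeasurable (fun p : α × β => Real.exp (t * (X p.1 + Y p)))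
      (μ.prod ν) := fun t =>
    (((hX.aemeasurable.comp_fst.add hYm.aemeasurable).const_mul t).exp).aestronglyMeasurable
  have hint : ∀ t, Integrable (fun p : α × β => Real.exp (t * (X p.1 + Y p))) (μ.prod ν) :=
    fun t => by
      refine (integrable_prod_iff (hmeas t)).2 ⟨.of_forall fun a => ?_, ?_⟩
      · simpa only [mul_add, Real.exp_add] using ((hY a).integrable_exp_mul t).const_mul _
      · refine ((hX.integrable_exp_mul t).mul_const (Real.exp (cY * t ^ 2 / 2))).mono'
          (hmeas t).norm.integral_prod_right' (.of_forall fun a => ?_)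
        simp only [Real.norm_eq_abs, Real.abs_exp]
        rw [abs_of_nonneg (integral_nonneg fun _ => (Real.exp_pos _).le)]
        exact hinner t a
  refine ⟨hint, fun t => ?_⟩
  calc mgf (fun p => X p.1 + Y p) (μ.prod ν) t
      = ∫ a, ∫ b, Real.exp (t * (X a + Y (a, b))) ∂ν ∂μ := integral_prod _ (hint t)
    _ ≤ ∫ a, Real.exp (t * X a) * Real.exp (cY * t ^ 2 / 2) ∂μ :=
        integral_mono (hint t).integral_prod_left ((hX.integrable_exp_mul t).mul_const _) (hinner t)
    _ = mgf X μ t * Real.exp (cY * t ^ 2 / 2) := integral_mul_const _ _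
    _ ≤ Real.exp (cX * t ^ 2 / 2) * Real.exp (cY * t ^ 2 / 2) := by gcongr; exact hX.mgf_le t
    _ = Real.exp ((cX + cY : NNReal) * t ^ 2 / 2) := by
        rw [← Real.exp_add, NNReal.coe_add]; ring_nf

lemma HasBoundedDifferences.insertNth_zero {n : ℕ} {α : Fin (n + 1) → Type*}
    {G : (∀ i, α i) → ℝ} {c : Fin (n + 1) → ℝ} (hG : HasBoundedDifferences G c) (a : α 0) :
    HasBoundedDifferences (fun x : ∀ i, α (Fin.succAbove 0 i) => G (Fin.insertNth 0 a x))
      (fun i => c (Fin.succAbove 0 i)) := fun x i y => by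
  simpa only [Fin.insertNth_update] using hG (Fin.insertNth 0 a x) (Fin.succAbove 0 i) y

lemma hasSubgaussianMGF_of_sub_le {α : Type*} [MeasurableSpace α] {μ : Measure α}
    [IsProbabilityMeasure μ] {g : α → ℝ} {r : ℝ} (hgm : Measurable g)
    (hg : ∀ a b, g a ≤ g b + r) :
    HasSubgaussianMGF (fun a => g a - ∫ b, g b ∂μ) ((‖r‖₊ / 2) ^ 2) μ := by
  have hinf : BddBelow (range g) := by
    obtain ⟨b⟩ := μ.nonempty_of_neZero
    exact ⟨g b - r, by rintro _ ⟨a, rfl⟩; linarith [hg b a]⟩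
  have hmem : ∀ a, g a ∈ Icc (⨅ b, g b) ((⨅ b, g b) + r) := fun a => by
    have : Nonempty α := ⟨a⟩
    refine ⟨ciInf_le hinf a, ?_⟩
    rw [← sub_le_iff_le_add]
    exact le_ciInf fun b => by linarith [hg a b]
  simpa using hasSubgaussianMGF_of_mem_Icc hgm.aemeasurable (.of_forall hmem)

lemma HasBoundedDifferences.integral_insertNth_zero_le {n : ℕ} {α : Fin (n + 1) → Type*}
    [∀ i, MeasurableSpace (α i)] (ν : Measure (∀ i, α (Fin.succAbove 0 i)))
    [IsProbabilityMeasure ν] {G : (∀ i, α i) → ℝ} {c : Fin (n + 1) → ℝ}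
    (hG : HasBoundedDifferences G c) (hGm : Measurable G) (a b : α 0) :
    ∫ z, G (Fin.insertNth 0 a z) ∂ν ≤ ∫ z, G (Fin.insertNth 0 b z) ∂ν + c 0 := by
  have hint : ∀ a, Integrable (fun z => G (Fin.insertNth 0 a z)) ν := fun a =>
    (hG.insertNth_zero a).integrable <| hGm.comp <|
      (MeasurableEquiv.piFinSuccAbove α 0).symm.measurable.comp measurable_prodMk_left
  calc ∫ z, G (Fin.insertNth 0 a z) ∂ν ≤ ∫ z, (G (Fin.insertNth 0 b z) + c 0) ∂ν := by
        refine integral_mono (hint a) ((hint b).add (integrable_const _)) fun z => ?_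
        simpa only [Fin.update_insertNth] using hG (Fin.insertNth 0 b z) 0 a
    _ = ∫ z, G (Fin.insertNth 0 b z) ∂ν + c 0 := by
        rw [integral_add (hint b) (integrable_const _), integral_const, probReal_univ, one_smul]

-- Doob decomposition one coordinate at a time: `G - E G` splits into the fluctuation of the
-- conditional mean `g` given coordinate `0`, and the fluctuation of `G` around `g`.
theorem HasBoundedDifferences.hasSubgaussianMGF {n : ℕ} {α : Fin n → Type*}
    [∀ i, MeasurableSpace (α i)] (μ : ∀ i, Measure (α i)) [∀ i, IsProbabilityMeasure (μ i)]
    {G : (∀ i, α i) → ℝ} {c : Fin n → ℝ} (hG : HasBoundedDifferences G c) (hGm : Measurable G) :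
    HasSubgaussianMGF (fun x => G x - ∫ y, G y ∂Measure.pi μ) (∑ i, (‖c i‖₊ / 2) ^ 2)
      (Measure.pi μ) := by
  induction n with
  | zero =>
    have hconst : (fun x => G x - ∫ y, G y ∂Measure.pi μ) = fun _ => 0 := by
      funext x
      simp [Subsingleton.elim _ x]
    rw [hconst]
    simp
  | succ n ih =>
    let e := MeasurableEquiv.piFinSuccAbove α 0
    have he : MeasurePreserving e (Measure.pi μ) ((μ 0).prod _) :=
      measurePreserving_piFinSuccAbove μ 0
    let G₀ : α 0 × (∀ i, α (Fin.succAbove 0 i)) → ℝ := fun p => G (e.symm p)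
    let g : α 0 → ℝ := fun a => ∫ z, G₀ (a, z) ∂Measure.pi fun i => μ (Fin.succAbove 0 i)
    have hG₀m : Measurable G₀ := hGm.comp e.symm.measurable
    have hgm : Measurable g := hG₀m.stronglyMeasurable.integral_prod_right'.measurable
    have hmean : ∫ y, G y ∂Measure.pi μ = ∫ a, g a ∂μ 0 :=
      (he.symm.integral_comp' G).symm.trans <| integral_prod G₀ <|
        (he.symm.integrable_comp_emb e.symm.measurableEmbedding).2 (hG.integrable hGm)
    have hsplit := hasSubgaussianMGF_prod_add
      (hasSubgaussianMGF_of_sub_le (μ := μ 0) hgm (hG.integral_insertNth_zero_le _ hGm))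
      (hG₀m.sub (hgm.comp measurable_fst))
      fun a => ih _ (hG.insertNth_zero a) (hG₀m.comp measurable_prodMk_left)
    rw [Fin.sum_univ_succAbove _ 0]
    rw [← he.map_eq] at hsplit
    convert hsplit.of_map e.measurable.aemeasurable using 2 with x
    simp only [hmean, Function.comp_apply, Pi.sub_apply, G₀, e.symm_apply_apply]
    ring

lemma HasBoundedDifferences.measureReal_le_sub_integral {n : ℕ} {α : Fin n → Type*}
    [∀ i, MeasurableSpace (α i)] (μ : ∀ i, Measure (α i)) [∀ i, IsProbabilityMeasure (μ i)]
    {G : (∀ i, α i) → ℝ} {c : Fin n → ℝ} (hG : HasBoundedDifferences G c) (hGm : Measurable G)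
    {ε : ℝ} (hε : 0 ≤ ε) :
    (Measure.pi μ).real {x | ε ≤ G x - ∫ y, G y ∂Measure.pi μ}
      ≤ Real.exp (-2 * ε ^ 2 / ∑ i, c i ^ 2) := by
  refine ((hG.hasSubgaussianMGF μ hGm).measure_ge_le hε).trans_eq ?_
  have hvar : 2 * ((∑ i, (‖c i‖₊ / 2) ^ 2 : NNReal) : ℝ) = (∑ i, c i ^ 2) / 2 := by
    push_cast
    simp only [div_pow, Real.norm_eq_abs, sq_abs, ← Finset.sum_div]
    ring
  rw [hvar, div_div_eq_mul_div, neg_mul, neg_mul, mul_comm]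

theorem HasBoundedDifferences.measure_integral_add_lt {n : ℕ} [NeZero n] {α : Fin n → Type*}
    [∀ i, MeasurableSpace (α i)] (μ : ∀ i, Measure (α i)) [∀ i, IsProbabilityMeasure (μ i)]
    {G : (∀ i, α i) → ℝ} {b : ℝ} (hG : HasBoundedDifferences G fun _ => b / n)
    (hGm : Measurable G) (hb : 0 < b) {δ : ℝ} (hδ : δ ∈ Ioc (0 : ℝ) 1) :
    Measure.pi μ {x | ∫ y, G y ∂Measure.pi μ + b * √(Real.log (1 / δ) / (2 * n)) < G x}
      ≤ ENNReal.ofReal δ := by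
  have hn : (0 : ℝ) < n := Nat.cast_pos.2 (NeZero.pos n)
  have hlog : 0 ≤ Real.log (1 / δ) := Real.log_nonneg ((one_le_div hδ.1).2 hδ.2)
  set ε := b * √(Real.log (1 / δ) / (2 * n)) with hε
  have hexp : Real.exp (-2 * ε ^ 2 / ∑ _i : Fin n, (b / n) ^ 2) = δ := by
    have : -2 * ε ^ 2 / ∑ _i : Fin n, (b / n) ^ 2 = Real.log δ := by
      rw [hε, mul_pow, Real.sq_sqrt (by positivity), Finset.sum_const, Finset.card_univ,
        Fintype.card_fin, nsmul_eq_mul, one_div, Real.log_inv]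
      field_simp
    rw [this, Real.exp_log hδ.1]
  rw [← ofReal_measureReal]
  refine ENNReal.ofReal_le_ofReal ?_
  calc (Measure.pi μ).real {x | ∫ y, G y ∂Measure.pi μ + ε < G x}
      ≤ (Measure.pi μ).real {x | ε ≤ G x - ∫ y, G y ∂Measure.pi μ} :=
        measureReal_mono <| ofPred_subset_ofPred.2 fun x hx => (lt_sub_iff_add_lt'.2 hx).le
    _ ≤ δ := hexp ▸ hG.measureReal_le_sub_integral μ hGm (by positivity)

end McDiarmid

lemma integral_comp_measurePreserving {α β : Type*} [MeasurableSpace α] [MeasurableSpace β]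
    {μ : Measure α} {ν : Measure β} {e : α → β} (he : MeasurePreserving e μ ν) {g : β → ℝ}
    (hg : AEStronglyMeasurable g ν) : ∫ x, g (e x) ∂μ = ∫ y, g y ∂ν := by
  rw [← he.map_eq] at hg ⊢
  exact (integral_map he.measurable.aemeasurable hg).symm

section Rademacher

open scoped BigOperators

variable {X : Type*} {n : ℕ} {F : Set (X → ℝ)} {f : X → ℝ} {a b : ℝ}

/-- The empirical mean of `f` over the sample `x`. -/
noncomputable def empMean (x : Fin n → X) (f : X → ℝ) : ℝ :=
  (1 / (n : ℝ)) * ∑ i, f (x i)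

/-- The Rademacher mean of `f` over the sample `x`, with sign `+1` where `σ` is `true` and `-1`
where it is `false`. -/
noncomputable def signedMean (σ : Fin n → Bool) (x : Fin n → X) (f : X → ℝ) : ℝ :=
  (1 / (n : ℝ)) * ∑ i, (if σ i then (1 : ℝ) else -1) * f (x i)

/-- The supremum of the Rademacher means over the class `F`; its average over all sign vectors
is `radS x F`. -/
noncomputable def signedSup (σ : Fin n → Bool) (F : Set (X → ℝ)) (x : Fin n → X) : ℝ :=
  sSup (signedMean σ x '' F)

/-- The largest amount by which a true mean over the class `F` exceeds the empirical mean. -/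
noncomputable def maxDeviation [MeasurableSpace X] (μ : Measure X) (F : Set (X → ℝ))
    (x : Fin n → X) : ℝ :=
  sSup ((fun f => ∫ z, f z ∂μ - empMean x f) '' F)

/-- The difference of `f` between the two entries of a pair: the function to which symmetrization
applies random signs, a sample of pairs being a sample together with its ghost sample. -/
def pairDiff (f : X → ℝ) : X × X → ℝ := fun p => f p.2 - f p.1

lemma radS_eq_expect (x : Fin n → X) (F : Set (X → ℝ)) :
    radS x F = 𝔼 σ : Fin n → Bool, signedSup σ F x := by
  simp only [Fintype.expect_eq_sum_div_card, Fintype.card_fun, Fintype.card_bool, Fintype.card_fin,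
    Nat.cast_pow, Nat.cast_ofNat]
  rfl

lemma signedMean_true (x : Fin n → X) (f : X → ℝ) :
    signedMean (fun _ => true) x f = empMean x f := by
  simp [signedMean, empMean]

lemma signedMean_not (σ : Fin n → Bool) (x : Fin n → X) (f : X → ℝ) :
    signedMean (fun i => !σ i) x f = -signedMean σ x f := by
  simp only [signedMean, ← mul_neg, ← Finset.sum_neg_distrib]
  congr 1
  refine Finset.sum_congr rfl fun i _ => ?_
  by_cases h : σ i <;> simp [h]

lemma signedMean_pairDiff (σ : Fin n → Bool) (z : Fin n → X × X) (f : X → ℝ) :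
    signedMean σ z (pairDiff f) =
      signedMean σ (fun i => (z i).2) f + signedMean (fun i => !σ i) (fun i => (z i).1) f := by
  rw [signedMean_not, ← sub_eq_add_neg]
  simp only [signedMean, pairDiff, mul_sub, Finset.sum_sub_distrib]

lemma empMean_pairDiff (z : Fin n → X × X) (f : X → ℝ) :
    empMean z (pairDiff f) = empMean (fun i => (z i).2) f - empMean (fun i => (z i).1) f := by
  simp only [empMean, pairDiff, Finset.sum_sub_distrib, mul_sub]

lemma signedMean_pairDiff_eq_empMean (σ : Fin n → Bool) (z : Fin n → X × X) (f : X → ℝ) :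
    signedMean σ z (pairDiff f) =
      empMean (fun i => if σ i then z i else (z i).swap) (pairDiff f) := by
  unfold signedMean empMean pairDiff
  congr 1
  refine Finset.sum_congr rfl fun i _ => ?_
  by_cases h : σ i <;> simp [h]

lemma abs_signedMean_le {B : ℝ} (hf : ∀ z, |f z| ≤ B) (σ : Fin n → Bool) (x : Fin n → X) :
    |signedMean σ x f| ≤ (1 / (n : ℝ)) * ∑ _i : Fin n, B := by
  rw [signedMean, abs_mul, abs_of_nonneg (by positivity : (0 : ℝ) ≤ 1 / n)]
  gcongr
  refine (Finset.abs_sum_le_sum_abs _ _).trans (Finset.sum_le_sum fun i _ => ?_)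
  cases σ i <;> simpa using hf (x i)

lemma abs_le_of_mem_Icc (hF : ∀ f ∈ F, ∀ z, f z ∈ Icc a b) :
    ∀ f ∈ F, ∀ z, |f z| ≤ max |a| |b| := fun f hf z =>
  abs_le_max_abs_abs (hF f hf z).1 (hF f hf z).2

lemma bddAbove_signedMean_image (hF : ∀ f ∈ F, ∀ z, f z ∈ Icc a b) (σ : Fin n → Bool)
    (x : Fin n → X) : BddAbove (signedMean σ x '' F) :=
  ⟨_, forall_mem_image.2 fun f hf =>
    (le_abs_self _).trans (abs_signedMean_le (abs_le_of_mem_Icc hF f hf) σ x)⟩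

lemma signedMean_le_signedSup (hF : ∀ f ∈ F, ∀ z, f z ∈ Icc a b) (hf : f ∈ F)
    (σ : Fin n → Bool) (x : Fin n → X) : signedMean σ x f ≤ signedSup σ F x :=
  le_csSup (bddAbove_signedMean_image hF σ x) (mem_image_of_mem _ hf)

lemma signedSup_pairDiff_le (hne : F.Nonempty) (hF : ∀ f ∈ F, ∀ z, f z ∈ Icc a b)
    (σ : Fin n → Bool) (z : Fin n → X × X) :
    signedSup σ (pairDiff '' F) z ≤
      signedSup σ F (fun i => (z i).2) + signedSup (fun i => !σ i) F (fun i => (z i).1) := by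
  refine csSup_le ((hne.image _).image _) (forall_mem_image.2 (forall_mem_image.2 fun f hf => ?_))
  rw [signedMean_pairDiff]
  exact add_le_add (signedMean_le_signedSup hF hf _ _) (signedMean_le_signedSup hF hf _ _)

lemma pairDiff_mem_Icc (hF : ∀ f ∈ F, ∀ z, f z ∈ Icc a b) :
    ∀ g ∈ pairDiff '' F, ∀ p, g p ∈ Icc (a - b) (b - a) :=
  forall_mem_image.2 fun f hf p =>
    ⟨sub_le_sub (hF f hf p.2).1 (hF f hf p.1).2, sub_le_sub (hF f hf p.2).2 (hF f hf p.1).1⟩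

lemma hasBoundedDifferences_mean {φ : Fin n → X → ℝ} (hφ : ∀ i y z, φ i y ≤ φ i z + b) :
    HasBoundedDifferences (fun x : Fin n → X => (1 / (n : ℝ)) * ∑ i, φ i (x i))
      fun _ => b / n := by
  intro x i y
  have hsum : ∑ j, φ j (Function.update x i y j) ≤ ∑ j, φ j (x j) + b := by
    rw [← Finset.add_sum_erase _ _ (Finset.mem_univ i),
      ← Finset.add_sum_erase _ (fun j => φ j (x j)) (Finset.mem_univ i), Function.update_self,
      Finset.sum_congr rfl fun j hj => by rw [Function.update_of_ne (Finset.ne_of_mem_erase hj)]]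
    linarith [hφ i y (x i)]
  calc (1 / (n : ℝ)) * ∑ j, φ j (Function.update x i y j)
      ≤ (1 / (n : ℝ)) * (∑ j, φ j (x j) + b) := by gcongr
    _ = _ := by ring

lemma hasBoundedDifferences_empMean (hf : ∀ z, f z ∈ Icc a b) :
    HasBoundedDifferences (fun x : Fin n → X => empMean x f) fun _ => (b - a) / n :=
  hasBoundedDifferences_mean fun _ y z => by linarith [(hf y).2, (hf z).1]

lemma hasBoundedDifferences_signedMean (hf : ∀ z, f z ∈ Icc a b) (σ : Fin n → Bool) :
    HasBoundedDifferences (fun x => signedMean σ x f) fun _ => (b - a) / n :=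
  hasBoundedDifferences_mean (φ := fun i z => (if σ i then (1 : ℝ) else -1) * f z) fun i y z => by
    obtain ⟨hya, hyb⟩ := hf y
    obtain ⟨hza, hzb⟩ := hf z
    cases σ i <;> simp only [if_true, Bool.false_eq_true, if_false] <;> linarith

lemma hasBoundedDifferences_signedSup (hne : F.Nonempty) (hF : ∀ f ∈ F, ∀ z, f z ∈ Icc a b)
    (σ : Fin n → Bool) : HasBoundedDifferences (signedSup σ F) fun _ => (b - a) / n :=
  .sSup_image hne (fun f hf => hasBoundedDifferences_signedMean (hF f hf) σ)
    (bddAbove_signedMean_image hF σ)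

lemma hasBoundedDifferences_radS (hne : F.Nonempty) (hF : ∀ f ∈ F, ∀ z, f z ∈ Icc a b) :
    HasBoundedDifferences (fun x : Fin n → X => radS x F) fun _ => (b - a) / n := by
  intro x i y
  simp only [radS_eq_expect]
  refine (Finset.expect_le_expect fun σ _ =>
    hasBoundedDifferences_signedSup hne hF σ x i y).trans ?_
  rw [Finset.expect_add_distrib, Fintype.expect_const]

lemma radS_nonneg (hne : F.Nonempty) (hF : ∀ f ∈ F, ∀ z, f z ∈ Icc a b) (x : Fin n → X) :
    0 ≤ radS x F := by
  obtain ⟨f, hf⟩ := hne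
  have hcancel : ∑ σ, signedMean σ x f = -∑ σ, signedMean σ x f := by
    rw [← Finset.sum_neg_distrib]
    refine Fintype.sum_bijective (fun σ i => !σ i) ?_ _ _ fun σ => ?_
    · exact Function.Involutive.bijective fun σ => by simp
    · rw [signedMean_not, neg_neg]
  refine div_nonneg ?_ (by positivity)
  calc (0 : ℝ) = ∑ σ, signedMean σ x f := by linarith
    _ ≤ ∑ σ, signedSup σ F x := Finset.sum_le_sum fun σ _ => signedMean_le_signedSup hF hf σ x

lemma radS_mono {F' : Set (X → ℝ)} (hne : F.Nonempty) (hFF' : F ⊆ F')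
    (hF' : ∀ f ∈ F', ∀ z, f z ∈ Icc a b) (x : Fin n → X) : radS x F ≤ radS x F' := by
  simp only [radS_eq_expect]
  exact Finset.expect_le_expect fun σ _ =>
    csSup_le_csSup (bddAbove_signedMean_image hF' σ x) (hne.image _) (image_mono hFF')

variable [MeasurableSpace X]

lemma measurable_empMean (hf : Measurable f) : Measurable fun x : Fin n → X => empMean x f := by
  unfold empMean
  fun_prop

lemma measurable_signedSup (hFc : F.Countable) (hFm : ∀ f ∈ F, Measurable f) (σ : Fin n → Bool) :
    Measurable (signedSup σ F) := by
  have := hFc.to_subtype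
  unfold signedSup signedMean
  simp only [sSup_image']
  refine .iSup fun f => ?_
  have := hFm f f.2
  fun_prop

lemma measurable_radS (hFc : F.Countable) (hFm : ∀ f ∈ F, Measurable f) :
    Measurable fun x : Fin n → X => radS x F :=
  (Finset.measurable_sum _ fun σ _ => measurable_signedSup hFc hFm σ).div_const _

lemma measurable_maxDeviation {μ : Measure X} (hFc : F.Countable) (hFm : ∀ f ∈ F, Measurable f) :
    Measurable (maxDeviation μ F : (Fin n → X) → ℝ) := by
  have := hFc.to_subtype
  unfold maxDeviation
  simp only [sSup_image']
  exact .iSup fun f => (measurable_empMean (hFm f f.2)).const_sub _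

lemma measurable_pairDiff (hFm : ∀ f ∈ F, Measurable f) : ∀ g ∈ pairDiff '' F, Measurable g :=
  forall_mem_image.2 fun f hf =>
    ((hFm f hf).comp measurable_snd).sub ((hFm f hf).comp measurable_fst)

variable {μ : Measure X} [IsProbabilityMeasure μ]

lemma bddAbove_deviation_image (hF : ∀ f ∈ F, ∀ z, f z ∈ Icc a b) (x : Fin n → X) :
    BddAbove ((fun f => ∫ z, f z ∂μ - empMean x f) '' F) := by
  refine ⟨max |a| |b| + (1 / (n : ℝ)) * ∑ _i : Fin n, max |a| |b|,
    forall_mem_image.2 fun f hf => ?_⟩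
  have habs := abs_le_of_mem_Icc hF f hf
  have hint : |∫ z, f z ∂μ| ≤ max |a| |b| := by
    simpa using norm_integral_le_of_norm_le_const (μ := μ) (f := f) (.of_forall habs)
  have hemp := abs_signedMean_le habs (fun _ => true) x
  rw [signedMean_true] at hemp
  linarith [le_abs_self (∫ z, f z ∂μ), neg_abs_le (empMean x f)]

lemma le_maxDeviation (hF : ∀ f ∈ F, ∀ z, f z ∈ Icc a b) (hf : f ∈ F) (x : Fin n → X) :
    ∫ z, f z ∂μ - empMean x f ≤ maxDeviation μ F x :=
  le_csSup (bddAbove_deviation_image hF x) (mem_image_of_mem _ hf)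

lemma hasBoundedDifferences_maxDeviation (hne : F.Nonempty)
    (hF : ∀ f ∈ F, ∀ z, f z ∈ Icc a b) :
    HasBoundedDifferences (maxDeviation μ F : (Fin n → X) → ℝ) fun _ => (b - a) / n :=
  .sSup_image hne (fun f hf => (hasBoundedDifferences_empMean (hF f hf)).const_sub _)
    (bddAbove_deviation_image hF)

lemma integrable_empMean (hfm : Measurable f) (hf : ∀ z, f z ∈ Icc a b) :
    Integrable (fun x : Fin n → X => empMean x f) (Measure.pi fun _ => μ) :=
  (hasBoundedDifferences_empMean hf).integrable (measurable_empMean hfm)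

lemma integrable_signedSup {P : Measure (Fin n → X)} [IsFiniteMeasure P] (hFc : F.Countable)
    (hne : F.Nonempty) (hFm : ∀ f ∈ F, Measurable f) (hF : ∀ f ∈ F, ∀ z, f z ∈ Icc a b)
    (σ : Fin n → Bool) : Integrable (signedSup σ F) P :=
  (hasBoundedDifferences_signedSup hne hF σ).integrable (measurable_signedSup hFc hFm σ)

lemma integral_empMean [NeZero n] (hf : Integrable f μ) :
    ∫ x : Fin n → X, empMean x f ∂Measure.pi (fun _ => μ) = ∫ z, f z ∂μ := by
  have hn : (n : ℝ) ≠ 0 := Nat.cast_ne_zero.2 (NeZero.ne n)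
  have heval := fun i : Fin n => measurePreserving_eval (fun _ : Fin n => μ) i
  simp only [empMean, integral_const_mul]
  rw [integral_finsetSum (f := fun i (x : Fin n → X) => f (x i)) _
    fun i _ => (heval i).integrable_comp_of_integrable hf]
  simp only [integral_comp_eval (μ := fun _ : Fin n => μ) hf.aestronglyMeasurable,
    Finset.sum_const, Finset.card_univ, Fintype.card_fin, nsmul_eq_mul]
  field_simp

lemma measurePreserving_fst_pi :
    MeasurePreserving (fun (z : Fin n → X × X) i => (z i).1) (Measure.pi fun _ => μ.prod μ)
      (Measure.pi fun _ => μ) :=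
  measurePreserving_pi _ _ fun _ => measurePreserving_fst

lemma measurePreserving_snd_pi :
    MeasurePreserving (fun (z : Fin n → X × X) i => (z i).2) (Measure.pi fun _ => μ.prod μ)
      (Measure.pi fun _ => μ) :=
  measurePreserving_pi _ _ fun _ => measurePreserving_snd

lemma integral_maxDeviation_le_integral_signedSup_pairDiff [NeZero n] (hFc : F.Countable)
    (hne : F.Nonempty) (hFm : ∀ f ∈ F, Measurable f) (hF : ∀ f ∈ F, ∀ z, f z ∈ Icc a b) :
    ∫ x : Fin n → X, maxDeviation μ F x ∂Measure.pi (fun _ => μ) ≤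
      ∫ z, signedSup (fun _ => true) (pairDiff '' F) z
        ∂Measure.pi fun _ : Fin n => μ.prod μ := by
  set P := Measure.pi fun _ : Fin n => μ
  set S := signedSup (fun _ : Fin n => true) (pairDiff '' F)
  let e := MeasurableEquiv.arrowProdEquivProdArrow X X (Fin n)
  have he : MeasurePreserving e (Measure.pi fun _ => μ.prod μ) (P.prod P) :=
    measurePreserving_arrowProdEquivProdArrow X X (Fin n) _ _
  have hSint : ∀ {Q : Measure (Fin n → X × X)} [IsFiniteMeasure Q], Integrable S Q :=
    integrable_signedSup (hFc.image _) (hne.image _) (measurable_pairDiff hFm)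
      (pairDiff_mem_Icc hF) _
  have hSeint : Integrable (fun p => S (e.symm p)) (P.prod P) :=
    he.symm.integrable_comp_of_integrable hSint
  rw [← he.symm.integral_comp' S, integral_prod _ hSeint]
  refine integral_mono ?_ hSeint.integral_prod_left fun x => ?_
  · exact (hasBoundedDifferences_maxDeviation hne hF).integrable (measurable_maxDeviation hFc hFm)
  have hslice : Integrable (S ∘ fun y => e.symm (x, y)) P :=
    (hSint (Q := P.map _)).comp_measurable (e.symm.measurable.comp measurable_prodMk_left)
  refine csSup_le (hne.image _) (forall_mem_image.2 fun f hf => ?_)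
  have hfint : Integrable f μ := .of_mem_Icc a b (hFm f hf).aemeasurable (.of_forall (hF f hf))
  calc ∫ z, f z ∂μ - empMean x f = ∫ y, (empMean y f - empMean x f) ∂P := by
        rw [integral_sub (integrable_empMean (hFm f hf) (hF f hf)) (integrable_const _),
          integral_empMean hfint, integral_const, probReal_univ, one_smul]
    _ ≤ ∫ y, S (e.symm (x, y)) ∂P := by
        refine integral_mono ((integrable_empMean (hFm f hf) (hF f hf)).sub (integrable_const _))
          hslice fun y => ?_
        have hle := signedMean_le_signedSup (pairDiff_mem_Icc hF) (mem_image_of_mem pairDiff hf)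
          (fun _ => true) (e.symm (x, y))
        rwa [signedMean_true, empMean_pairDiff] at hle

lemma integral_signedSup_pairDiff_eq (σ : Fin n → Bool) (hFc : F.Countable)
    (hFm : ∀ f ∈ F, Measurable f) :
    ∫ z, signedSup σ (pairDiff '' F) z ∂Measure.pi (fun _ => μ.prod μ) =
      ∫ z, signedSup (fun _ : Fin n => true) (pairDiff '' F) z
        ∂Measure.pi fun _ => μ.prod μ := by
  let swap : (Fin n → X × X) → (Fin n → X × X) := fun z i => if σ i then z i else (z i).swap
  have hcoord : ∀ i, MeasurePreserving (fun p : X × X => if σ i then p else p.swap)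
      (μ.prod μ) (μ.prod μ) := fun i => by
    cases σ i
    · exact Measure.measurePreserving_swap
    · exact .id _
  have hswap : MeasurePreserving swap (Measure.pi fun _ => μ.prod μ)
      (Measure.pi fun _ => μ.prod μ) := measurePreserving_pi _ _ hcoord
  have hsign : ∀ z, signedSup σ (pairDiff '' F) z =
      signedSup (fun _ => true) (pairDiff '' F) (swap z) := fun z => by
    simp only [signedSup, image_image, signedMean_pairDiff_eq_empMean σ, signedMean_true, swap]
  have hmeas := measurable_signedSup (n := n) (hFc.image _) (measurable_pairDiff hFm)
    fun _ => true
  simp only [hsign]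
  exact integral_comp_measurePreserving hswap hmeas.aestronglyMeasurable

lemma integral_signedSup_pairDiff_le (σ : Fin n → Bool) (hFc : F.Countable) (hne : F.Nonempty)
    (hFm : ∀ f ∈ F, Measurable f) (hF : ∀ f ∈ F, ∀ z, f z ∈ Icc a b) :
    ∫ z, signedSup σ (pairDiff '' F) z ∂Measure.pi (fun _ => μ.prod μ) ≤
      ∫ x, signedSup σ F x ∂Measure.pi (fun _ => μ) +
        ∫ x, signedSup (fun i => !σ i) F x ∂Measure.pi fun _ => μ := by
  have hint := fun τ => integrable_signedSup (P := Measure.pi fun _ : Fin n => μ) hFc hne hFm hF τ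
  have hsnd := measurePreserving_snd_pi (μ := μ) (n := n)
  have hfst := measurePreserving_fst_pi (μ := μ) (n := n)
  have hintS := hsnd.integrable_comp_of_integrable (hint σ)
  have hintF := hfst.integrable_comp_of_integrable (hint fun i => !σ i)
  calc ∫ z, signedSup σ (pairDiff '' F) z ∂Measure.pi (fun _ => μ.prod μ)
      ≤ ∫ z, (signedSup σ F (fun i => (z i).2) +
          signedSup (fun i => !σ i) F (fun i => (z i).1)) ∂Measure.pi (fun _ => μ.prod μ) :=
        integral_mono
          (integrable_signedSup (hFc.image _) (hne.image _) (measurable_pairDiff hFm)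
            (pairDiff_mem_Icc hF) σ)
          (hintS.add hintF) (signedSup_pairDiff_le hne hF σ)
    _ = _ := (integral_add hintS hintF).trans <| congrArg₂ _
        (integral_comp_measurePreserving hsnd (hint σ).aestronglyMeasurable)
        (integral_comp_measurePreserving hfst (hint _).aestronglyMeasurable)

theorem integral_maxDeviation_le_two_mul_integral_radS [NeZero n] (hFc : F.Countable)
    (hne : F.Nonempty) (hFm : ∀ f ∈ F, Measurable f) (hF : ∀ f ∈ F, ∀ z, f z ∈ Icc a b) :
    ∫ x : Fin n → X, maxDeviation μ F x ∂Measure.pi (fun _ => μ) ≤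
      2 * ∫ x : Fin n → X, radS x F ∂Measure.pi fun _ => μ := by
  set I : (Fin n → Bool) → ℝ := fun σ => ∫ x, signedSup σ F x ∂Measure.pi fun _ => μ
  set D := ∫ x : Fin n → X, maxDeviation μ F x ∂Measure.pi (fun _ => μ)
  have hpair : ∀ σ : Fin n → Bool, D ≤ I σ + I fun i => !σ i := fun σ => by
    have hghost := integral_maxDeviation_le_integral_signedSup_pairDiff (μ := μ) (n := n)
      hFc hne hFm hF
    rw [← integral_signedSup_pairDiff_eq σ hFc hFm] at hghost
    exact hghost.trans (integral_signedSup_pairDiff_le σ hFc hne hFm hF)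
  have hflip : 𝔼 σ : Fin n → Bool, I (fun i => !σ i) = 𝔼 σ, I σ :=
    Fintype.expect_bijective (fun σ i => !σ i)
      (Function.Involutive.bijective fun σ => by simp) _ _ fun _ => rfl
  have hradS : ∫ x : Fin n → X, radS x F ∂Measure.pi (fun _ => μ) = 𝔼 σ, I σ := by
    simp only [radS_eq_expect, Fintype.expect_eq_sum_div_card, integral_div]
    rw [integral_finsetSum _ fun σ _ => integrable_signedSup hFc hne hFm hF σ]
  calc D = 𝔼 _σ : Fin n → Bool, D := (Fintype.expect_const D).symm
    _ ≤ 𝔼 σ, (I σ + I (fun i => !σ i)) := Finset.expect_le_expect fun σ _ => hpair σ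
    _ = 2 * ∫ x : Fin n → X, radS x F ∂Measure.pi fun _ => μ := by
        rw [Finset.expect_add_distrib, hflip, hradS, two_mul]

theorem measure_exists_empMean_add_radS_lt_integral [NeZero n] (hFc : F.Countable)
    (hne : F.Nonempty) (hFm : ∀ f ∈ F, Measurable f) (hF : ∀ f ∈ F, ∀ z, f z ∈ Icc a b)
    (hab : a < b) {δ : ℝ} (hδ : δ ∈ Ioc (0 : ℝ) 1) :
    Measure.pi (fun _ : Fin n => μ) {x | ∃ f ∈ F, empMean x f + 2 * radS x F +
      3 * (b - a) * √(Real.log (1 / δ) / (2 * n)) < ∫ z, f z ∂μ} ≤ ENNReal.ofReal δ := by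
  set P := Measure.pi fun _ : Fin n => μ
  let Φ : (Fin n → X) → ℝ := fun x => maxDeviation μ F x - 2 * radS x F
  have hdev := hasBoundedDifferences_maxDeviation (μ := μ) (n := n) hne hF
  have hrad := (hasBoundedDifferences_radS (n := n) hne hF).const_mul zero_le_two
  have hdevm := measurable_maxDeviation (μ := μ) (n := n) hFc hFm
  have hradm := (measurable_radS (n := n) hFc hFm).const_mul 2
  have hΦ : HasBoundedDifferences Φ fun _ => 3 * (b - a) / n := by
    convert hdev.sub hrad using 2
    ring
  have hmean : ∫ x, Φ x ∂P ≤ 0 := by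
    rw [integral_sub (hdev.integrable hdevm) (hrad.integrable hradm), integral_const_mul]
    exact sub_nonpos.2 (integral_maxDeviation_le_two_mul_integral_radS hFc hne hFm hF)
  refine (measure_mono ?_).trans
    (hΦ.measure_integral_add_lt (fun _ => μ) (hdevm.sub hradm) (by linarith) hδ)
  rintro x ⟨f, hf, hlt⟩
  have hle : ∫ z, f z ∂μ - empMean x f ≤ maxDeviation μ F x := le_maxDeviation hF hf x
  change _ < maxDeviation μ F x - 2 * radS x F
  linarith

theorem measure_integral_add_lt_empMean [NeZero n] (hfm : Measurable f)
    (hf : ∀ z, f z ∈ Icc a b) (hab : a < b) {δ : ℝ} (hδ : δ ∈ Ioc (0 : ℝ) 1) :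
    Measure.pi (fun _ : Fin n => μ)
      {x | ∫ z, f z ∂μ + (b - a) * √(Real.log (1 / δ) / (2 * n)) < empMean x f} ≤
      ENNReal.ofReal δ := by
  have hfint : Integrable f μ := .of_mem_Icc a b hfm.aemeasurable (.of_forall hf)
  simpa only [integral_empMean hfint] using
    (hasBoundedDifferences_empMean hf).measure_integral_add_lt (fun _ : Fin n => μ)
      (measurable_empMean hfm) (sub_pos.2 hab) hδ

end Rademacher

section LayerCake

variable {X : Type*} [MeasurableSpace X] {μ ν : Measure X} {u : X → ℝ} {b : ℝ}

lemma integral_eq_setIntegral_Ioc_measureReal_lt [IsFiniteMeasure μ] (hum : Measurable u)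
    (hu : ∀ x, u x ∈ Icc 0 b) : ∫ x, u x ∂μ = ∫ t in Ioc 0 b, μ.real {x | t < u x} := by
  have hint : Integrable u μ := .of_mem_Icc 0 b hum.aemeasurable (.of_forall hu)
  rw [hint.integral_eq_integral_meas_lt (.of_forall fun x => (hu x).1)]
  refine setIntegral_eq_of_subset_of_forall_sdiff_eq_zero measurableSet_Ioi Ioc_subset_Ioi_self ?_
  rintro t ⟨ht0, htb⟩
  have hempty : {x | t < u x} = ∅ := eq_empty_of_forall_notMem fun x (hx : t < u x) =>
    htb ⟨ht0, hx.le.trans (hu x).2⟩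
  rw [hempty, measureReal_empty]

lemma antitone_measureReal_lt [IsFiniteMeasure μ] : Antitone fun t => μ.real {x | t < u x} :=
  fun _ _ hst => measureReal_mono (ofPred_subset_ofPred.2 fun _ hx => hst.trans_lt hx)

lemma integral_le_integral_add_of_measureReal_lt_le [IsFiniteMeasure μ] [IsFiniteMeasure ν]
    (hum : Measurable u) (hb : 0 ≤ b) (hu : ∀ x, u x ∈ Icc 0 b) {K : ℝ}
    (hK : ∀ t ∈ Icc 0 b, μ.real {x | t < u x} ≤ ν.real {x | t < u x} + K) :
    ∫ x, u x ∂μ ≤ ∫ x, u x ∂ν + b * K := by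
  have hint : ∀ (ρ : Measure X) [IsFiniteMeasure ρ],
      IntegrableOn (fun t => ρ.real {x | t < u x}) (Ioc 0 b) := fun ρ _ =>
    ((antitone_measureReal_lt.antitoneOn _).integrableOn_isCompact isCompact_Icc).mono_set
      Ioc_subset_Icc_self
  rw [integral_eq_setIntegral_Ioc_measureReal_lt hum hu,
    integral_eq_setIntegral_Ioc_measureReal_lt hum hu]
  calc ∫ t in Ioc 0 b, μ.real {x | t < u x}
      ≤ ∫ t in Ioc 0 b, (ν.real {x | t < u x} + K) :=
        setIntegral_mono_on (hint μ) ((hint ν).add (integrable_const K)) measurableSet_Ioc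
          fun t ht => hK t (Ioc_subset_Icc_self ht)
    _ = _ := by
        rw [integral_add (hint ν) (integrable_const K), setIntegral_const,
          Real.volume_real_Ioc_of_le hb, sub_zero, smul_eq_mul]

lemma exists_rat_lt_measureReal_lt [IsFiniteMeasure μ] {t C : ℝ}
    (hC : C < μ.real {x | t < u x}) : ∃ q : ℚ, t < q ∧ C < μ.real {x | (q : ℝ) < u x} := by
  by_contra! hle
  have hunion : {x | t < u x} = ⋃ q : {q : ℚ // t < q}, {x | (q : ℝ) < u x} := by
    ext x
    simp only [mem_iUnion, mem_ofPred_eq, Subtype.exists, exists_prop]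
    exact ⟨exists_rat_btwn, fun ⟨q, htq, hqx⟩ => htq.trans hqx⟩
  have hdir : Directed (· ⊆ ·) fun q : {q : ℚ // t < q} => {x | (q : ℝ) < u x} :=
    Antitone.directed_le fun p q hpq => ofPred_subset_ofPred.2 fun x hx =>
      (Rat.cast_le.2 hpq : (p : ℝ) ≤ q).trans_lt hx
  obtain ⟨q, htq⟩ := exists_rat_gt t
  refine hC.not_ge (ENNReal.toReal_le_of_le_ofReal (measureReal_nonneg.trans (hle q htq)) ?_)
  rw [hunion, hdir.measure_iUnion]
  exact iSup_le fun q => (ENNReal.le_ofReal_iff_toReal_le (measure_ne_top μ _)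
    (measureReal_nonneg.trans (hle q q.2))).2 (hle q q.2)

lemma integral_ite_lt (hum : Measurable u) (t : ℝ) :
    ∫ x, (if t < u x then (1 : ℝ) else 0) ∂μ = μ.real {x | t < u x} :=
  integral_indicator_one (measurableSet_lt measurable_const hum)

end LayerCake

section EmpiricalMeasure

variable {X : Type*} [MeasurableSpace X] {n : ℕ}

lemma isProbabilityMeasure_empD [NeZero n] (x : Fin n → X) : IsProbabilityMeasure (empD x) := by
  constructor
  simp only [empD, Measure.smul_apply, Measure.finsetSum_apply, measure_univ, smul_eq_mul,
    Finset.sum_const, Finset.card_univ, Fintype.card_fin, nsmul_eq_mul, mul_one]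
  exact ENNReal.inv_mul_cancel (Nat.cast_ne_zero.2 (NeZero.ne n)) (ENNReal.natCast_ne_top n)

lemma integral_empD {f : X → ℝ} (hf : Measurable f) (x : Fin n → X) :
    ∫ z, f z ∂empD x = empMean x f := by
  rw [empD, integral_smul_measure, integral_finsetSum_measure fun i _ =>
    integrable_dirac' hf.stronglyMeasurable enorm_lt_top]
  simp [empMean, integral_dirac' _ _ hf.stronglyMeasurable]

end EmpiricalMeasure

section ThresholdClass

variable {X : Type*} {g g' : X → ℝ} {H : Set (X → ℝ)}

/-- The members of `Htilde H` with a rational threshold: a countable subclass, to which the uniform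
deviation bound applies, and from which all real thresholds are recovered as limits. -/
def ratHtilde (H : Set (X → ℝ)) : Set (X → ℝ) :=
  {u | ∃ g ∈ H, ∃ g' ∈ H, ∃ q : ℚ, (q : ℝ) ∈ Icc (0 : ℝ) 1 ∧
    u = fun x => if (q : ℝ) < |g x - g' x| then (1 : ℝ) else 0}

lemma ratHtilde_subset_Htilde : ratHtilde H ⊆ Htilde H := by
  rintro _ ⟨g, hg, g', hg', q, hq, rfl⟩
  exact ⟨g, hg, g', hg', q, hq, rfl⟩

lemma countable_ratHtilde (hH : H.Countable) : (ratHtilde H).Countable := by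
  refine (((hH.prod hH).prod (countable_univ (α := ℚ))).image fun p x =>
    if (p.2 : ℝ) < |p.1.1 x - p.1.2 x| then (1 : ℝ) else 0).mono ?_
  rintro _ ⟨g, hg, g', hg', q, -, rfl⟩
  exact ⟨((g, g'), q), ⟨⟨hg, hg'⟩, mem_univ q⟩, rfl⟩

lemma nonempty_ratHtilde (hH : H.Nonempty) : (ratHtilde H).Nonempty :=
  let ⟨g, hg⟩ := hH
  ⟨_, g, hg, g, hg, 0, by simp, rfl⟩

lemma nonempty_Htilde (hH : H.Nonempty) : (Htilde H).Nonempty :=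
  (nonempty_ratHtilde hH).mono ratHtilde_subset_Htilde

lemma mem_Icc_of_mem_Htilde : ∀ u ∈ Htilde H, ∀ x, u x ∈ Icc (0 : ℝ) 1 := by
  rintro _ ⟨g, -, g', -, t, -, rfl⟩ x
  dsimp only
  split_ifs <;> simp

lemma mem_Icc_of_mem_ratHtilde : ∀ u ∈ ratHtilde H, ∀ x, u x ∈ Icc (0 : ℝ) 1 := fun u hu =>
  mem_Icc_of_mem_Htilde u (ratHtilde_subset_Htilde hu)

lemma abs_sub_mem_Icc (hH : ∀ h ∈ H, ∀ x, h x ∈ Icc (0 : ℝ) 1) (hg : g ∈ H) (hg' : g' ∈ H)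
    (x : X) : |g x - g' x| ∈ Icc (0 : ℝ) 1 :=
  ⟨abs_nonneg _, abs_sub_le_of_nonneg_of_le (hH g hg x).1 (hH g hg x).2 (hH g' hg' x).1
    (hH g' hg' x).2⟩

variable [MeasurableSpace X] {μ ν : Measure X}

lemma measurable_abs_sub (hHm : ∀ h ∈ H, Measurable h) (hg : g ∈ H) (hg' : g' ∈ H) :
    Measurable fun x => |g x - g' x| :=
  ((hHm g hg).sub (hHm g' hg')).abs

lemma integrable_abs_sub [IsFiniteMeasure μ] (hHm : ∀ h ∈ H, Measurable h)
    (hH : ∀ h ∈ H, ∀ x, h x ∈ Icc (0 : ℝ) 1) (hg : g ∈ H) (hg' : g' ∈ H) :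
    Integrable (fun x => |g x - g' x|) μ :=
  .of_mem_Icc 0 1 (measurable_abs_sub hHm hg hg').aemeasurable
    (.of_forall (abs_sub_mem_Icc hH hg hg'))

lemma measurable_of_mem_ratHtilde (hHm : ∀ h ∈ H, Measurable h) :
    ∀ u ∈ ratHtilde H, Measurable u := by
  rintro _ ⟨g, hg, g', hg', q, -, rfl⟩
  exact .ite (measurableSet_lt measurable_const (measurable_abs_sub hHm hg hg')) measurable_const
    measurable_const

lemma measureReal_eq_one_le_add_dH [IsProbabilityMeasure μ] [IsProbabilityMeasure ν]
    {G : Set (X → ℝ)} {u : X → ℝ} (hu : u ∈ G) :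
    ν.real {x | u x = 1} ≤ μ.real {x | u x = 1} + dH G μ ν := by
  have hbdd : BddAbove ((fun u => |μ.real {x | u x = 1} - ν.real {x | u x = 1}|) '' G) :=
    ⟨1, forall_mem_image.2 fun u _ => abs_sub_le_of_nonneg_of_le measureReal_nonneg
      measureReal_le_one measureReal_nonneg measureReal_le_one⟩
  have hle : |μ.real {x | u x = 1} - ν.real {x | u x = 1}| ≤ dH G μ ν :=
    le_csSup hbdd (mem_image_of_mem _ hu)
  linarith [neg_abs_le (μ.real {x | u x = 1} - ν.real {x | u x = 1})]

lemma measureReal_lt_abs_sub_le_add_dH [IsProbabilityMeasure μ] [IsProbabilityMeasure ν]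
    (hg : g ∈ H) (hg' : g' ∈ H) {t : ℝ} (ht : t ∈ Icc (0 : ℝ) 1) :
    ν.real {x | t < |g x - g' x|} ≤ μ.real {x | t < |g x - g' x|} + dH (Htilde H) μ ν := by
  simpa using measureReal_eq_one_le_add_dH (μ := μ) (ν := ν)
    (show _ ∈ Htilde H from ⟨g, hg, g', hg', t, ht, rfl⟩)

lemma measureReal_lt_abs_sub_le_of_ratHtilde [IsFiniteMeasure μ] [IsFiniteMeasure ν]
    (hHm : ∀ h ∈ H, Measurable h) (hH : ∀ h ∈ H, ∀ x, h x ∈ Icc (0 : ℝ) 1) {K : ℝ} (hK0 : 0 ≤ K)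
    (hK : ∀ u ∈ ratHtilde H, ∫ x, u x ∂μ ≤ ∫ x, u x ∂ν + K) (hg : g ∈ H) (hg' : g' ∈ H)
    {t : ℝ} (ht : 0 ≤ t) :
    μ.real {x | t < |g x - g' x|} ≤ ν.real {x | t < |g x - g' x|} + K := by
  by_contra! hlt
  obtain ⟨q, htq, hq⟩ := exists_rat_lt_measureReal_lt hlt
  have hq1 : (q : ℝ) ≤ 1 := by
    have hpos : 0 < μ.real {x | (q : ℝ) < |g x - g' x|} :=
      (add_nonneg measureReal_nonneg hK0).trans_lt hq
    obtain ⟨x, hx⟩ := nonempty_of_measureReal_ne_zero hpos.ne'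
    exact hx.le.trans (abs_sub_mem_Icc hH hg hg' x).2
  have hle := hK _ ⟨g, hg, g', hg', q, ⟨ht.trans htq.le, hq1⟩, rfl⟩
  have hgm := measurable_abs_sub hHm hg hg'
  rw [integral_ite_lt hgm, integral_ite_lt hgm] at hle
  linarith [antitone_measureReal_lt (μ := ν) (u := fun x => |g x - g' x|) htq.le]

end ThresholdClass

lemma sqrt_log_div_add_le (n : ℕ) {δ : ℝ} (hδ : 0 < δ) :
    √(Real.log (2 / δ) / (2 * n)) + 3 * √(Real.log (2 / δ) / (2 * n)) ≤
      3 * √(Real.log (4 / δ) / (2 * n)) + 6 * √(Real.log (8 / δ) / (2 * n)) :=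
  calc √(Real.log (2 / δ) / (2 * n)) + 3 * √(Real.log (2 / δ) / (2 * n))
      = 3 * √(Real.log (2 / δ) / (2 * n)) + 1 * √(Real.log (2 / δ) / (2 * n)) := by ring
    _ ≤ _ := by gcongr <;> norm_num

section Transfer

variable {X : Type*} [MeasurableSpace X] {H : Set (X → ℝ)} {m n : ℕ}

lemma integral_abs_sub_le_integral_add {μ : Measure X} {u v w : X → ℝ}
    (huv : Integrable (fun x => |u x - v x|) μ) (hvw : Integrable (fun x => |v x - w x|) μ) :
    ∫ x, |u x - w x| ∂μ ≤ ∫ x, |u x - v x| ∂μ + ∫ x, |v x - w x| ∂μ := by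
  rw [← integral_add huv hvw]
  exact integral_mono_of_nonneg (.of_forall fun x => abs_nonneg _) (huv.add hvw)
    (.of_forall fun x => abs_sub_le _ _ _)

lemma integral_abs_sub_le_empMean_add_dH [NeZero m] [NeZero n] {μ : Measure X} [IsFiniteMeasure μ]
    (hHm : ∀ h ∈ H, Measurable h) (hH : ∀ h ∈ H, ∀ x, h x ∈ Icc (0 : ℝ) 1) {x : Fin m → X}
    {y : Fin n → X} {K : ℝ} (hK0 : 0 ≤ K)
    (hK : ∀ u ∈ ratHtilde H, ∫ z, u z ∂μ ≤ empMean y u + K) {g g' : X → ℝ} (hg : g ∈ H)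
    (hg' : g' ∈ H) :
    ∫ z, |g z - g' z| ∂μ ≤
      empMean x (fun z => |g z - g' z|) + dH (Htilde H) (empD x) (empD y) + K := by
  have := isProbabilityMeasure_empD x
  have := isProbabilityMeasure_empD y
  have hgm := measurable_abs_sub hHm hg hg'
  have hKy : ∀ u ∈ ratHtilde H, ∫ z, u z ∂μ ≤ ∫ z, u z ∂empD y + K := fun u hu => by
    rw [integral_empD (measurable_of_mem_ratHtilde hHm u hu)]
    exact hK u hu
  have hlayer := integral_le_integral_add_of_measureReal_lt_le (μ := μ) (ν := empD x) hgm
    zero_le_one (abs_sub_mem_Icc hH hg hg') (K := dH (Htilde H) (empD x) (empD y) + K)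
    fun t ht => by
      linarith [measureReal_lt_abs_sub_le_of_ratHtilde hHm hH hK0 hKy hg hg' ht.1,
        measureReal_lt_abs_sub_le_add_dH (μ := empD x) (ν := empD y) hg hg' ht]
  rw [integral_empD hgm] at hlayer
  linarith

lemma integral_abs_sub_le_empMean_add_min [NeZero m] [NeZero n] {μ : Measure X} [IsFiniteMeasure μ]
    (hHm : ∀ h ∈ H, Measurable h) (hH : ∀ h ∈ H, ∀ x, h x ∈ Icc (0 : ℝ) 1) {x : Fin m → X}
    {y : Fin n → X} {K E ε : ℝ} (hK0 : 0 ≤ K) (hε : 0 ≤ ε)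
    (hK : ∀ u ∈ ratHtilde H, ∫ z, u z ∂μ ≤ empMean y u + K) {h fS fT : X → ℝ} (hh : h ∈ H)
    (hfS : fS ∈ H) (hfT : fT ∈ H) (hE : empMean x (fun z => |fS z - fT z|) ≤ E + ε) :
    ∫ z, |h z - fT z| ∂μ ≤
      empMean x (fun z => |h z - fS z|) + dH (Htilde H) (empD x) (empD y) + K +
        min E (∫ z, |fS z - fT z| ∂μ) + ε := by
  have := isProbabilityMeasure_empD x
  have hint : ∀ (ρ : Measure X) [IsFiniteMeasure ρ] {g g' : X → ℝ}, g ∈ H → g' ∈ H →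
      Integrable (fun z => |g z - g' z|) ρ := fun ρ _ _ _ => integrable_abs_sub hHm hH
  have htransfer := fun {g} (hg : g ∈ H) =>
    integral_abs_sub_le_empMean_add_dH (x := x) hHm hH hK0 hK hh hg
  have hpop := integral_abs_sub_le_integral_add (hint μ hh hfS) (hint μ hfS hfT)
  have hemp := integral_abs_sub_le_integral_add (hint (empD x) hh hfS) (hint (empD x) hfS hfT)
  simp only [integral_empD, measurable_abs_sub hHm, hh, hfS, hfT] at hemp
  rcases min_choice E (∫ z, |fS z - fT z| ∂μ) with hmin | hmin <;> rw [hmin]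
  · linarith [htransfer hfT]
  · linarith [htransfer hfS]

lemma ofReal_one_sub_add_le_measure_prod {Y : Type*} [MeasurableSpace Y] {μ : Measure X}
    {ν : Measure Y} [IsProbabilityMeasure μ] [IsProbabilityMeasure ν] {A : Set X} {B : Set Y}
    {s : Set (X × Y)} {α β : ℝ} (hα : 0 ≤ α) (hβ : 0 ≤ β) (hA : μ A ≤ ENNReal.ofReal α)
    (hB : ν B ≤ ENNReal.ofReal β) (hs : ∀ x ∉ A, ∀ y ∉ B, (x, y) ∈ s) :
    ENNReal.ofReal (1 - (α + β)) ≤ (μ.prod ν) s := by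
  have hcover : univ ⊆ s ∪ (A ×ˢ univ ∪ univ ×ˢ B) := fun ⟨x, y⟩ _ => by
    by_cases hx : x ∈ A
    · exact .inr (.inl ⟨hx, mem_univ y⟩)
    by_cases hy : y ∈ B
    · exact .inr (.inr ⟨mem_univ x, hy⟩)
    · exact .inl (hs x hx y hy)
  rw [ENNReal.ofReal_sub _ (add_nonneg hα hβ), ENNReal.ofReal_one, tsub_le_iff_right]
  calc 1 = (μ.prod ν) univ := measure_univ.symm
    _ ≤ (μ.prod ν) (s ∪ (A ×ˢ univ ∪ univ ×ˢ B)) := measure_mono hcover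
    _ ≤ (μ.prod ν) s + ((μ.prod ν) (A ×ˢ univ) + (μ.prod ν) (univ ×ˢ B)) :=
      (measure_union_le _ _).trans (add_le_add_right (measure_union_le _ _) _)
    _ ≤ (μ.prod ν) s + ENNReal.ofReal (α + β) := by
      rw [Measure.prod_prod, Measure.prod_prod, measure_univ, measure_univ, mul_one, one_mul,
        ENNReal.ofReal_add hα hβ]
      gcongr

theorem stmt_6_general {DS DT : Measure X} [IsProbabilityMeasure DS] [IsProbabilityMeasure DT]
    [NeZero m] [NeZero n] (hHc : H.Countable) (hHm : ∀ h ∈ H, Measurable h)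
    (hH : ∀ h ∈ H, ∀ x, h x ∈ Icc (0 : ℝ) 1) {fS fT : X → ℝ} (hfS : fS ∈ H) (hfT : fT ∈ H) {δ : ℝ}
    (hδ : δ ∈ Ioo (0 : ℝ) 1) :
    ENNReal.ofReal (1 - δ) ≤
      ((Measure.pi fun _ : Fin m => DS).prod (Measure.pi fun _ : Fin n => DT))
        {p | ∀ h ∈ H,
          ∫ x, |h x - fT x| ∂DT ≤
            (1 / (m : ℝ)) * ∑ i, |h (p.1 i) - fS (p.1 i)|
              + dH (Htilde H) (empD p.1) (empD p.2)
              + 2 * radS p.2 (Htilde H)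
              + min (∫ x, |fS x - fT x| ∂DS) (∫ x, |fS x - fT x| ∂DT)
              + √(Real.log (2 / δ) / (2 * m))
              + 3 * √(Real.log (2 / δ) / (2 * n))} := by
  have hδ2 : δ / 2 ∈ Ioc (0 : ℝ) 1 := ⟨half_pos hδ.1, (half_le_self hδ.1.le).trans hδ.2.le⟩
  have hsource := measure_integral_add_lt_empMean (μ := DS) (n := m)
    (measurable_abs_sub hHm hfS hfT) (abs_sub_mem_Icc hH hfS hfT) zero_lt_one hδ2
  have hrat := nonempty_ratHtilde ⟨fS, hfS⟩
  have htarget := measure_exists_empMean_add_radS_lt_integral (μ := DT) (n := n)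
    (countable_ratHtilde hHc) hrat (measurable_of_mem_ratHtilde hHm) mem_Icc_of_mem_ratHtilde
    zero_lt_one hδ2
  simp only [one_div_div, sub_zero, one_mul, mul_one] at hsource htarget
  set εS := √(Real.log (2 / δ) / (2 * m))
  set εT := √(Real.log (2 / δ) / (2 * n))
  have hsplit : 1 - δ = 1 - (δ / 2 + δ / 2) := by rw [add_halves]
  rw [hsplit]
  refine ofReal_one_sub_add_le_measure_prod hδ2.1.le hδ2.1.le hsource htarget
    fun x hx y hy h hh => ?_
  simp only [mem_ofPred_eq, not_lt, not_exists, not_and] at hx hy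
  have hmono := radS_mono hrat ratHtilde_subset_Htilde mem_Icc_of_mem_Htilde y
  have hnonneg := radS_nonneg (nonempty_Htilde ⟨fS, hfS⟩) mem_Icc_of_mem_Htilde y
  have hbound := integral_abs_sub_le_empMean_add_min
    (K := 2 * radS y (Htilde H) + 3 * εT) hHm hH
    (by positivity) (Real.sqrt_nonneg _) (fun u hu => by linarith only [hy u hu, hmono])
    hh hfS hfT hx
  unfold empMean at hbound
  linarith only [hbound]

end Transfer

theorem stmt_6 {X : Type*} [MeasurableSpace X]
    (DS DT : Measure X) [IsProbabilityMeasure DS] [IsProbabilityMeasure DT]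
    (fS fT : X → ℝ) (hfSmeas : Measurable fS) (hfTmeas : Measurable fT)
    (hfSrange : ∀ x, fS x ∈ Icc (0 : ℝ) 1) (hfTrange : ∀ x, fT x ∈ Icc (0 : ℝ) 1)
    (H : Set (X → ℝ)) (hHcount : H.Countable) (hHne : H.Nonempty)
    (hmeas : ∀ h ∈ H, Measurable h)
    (hrange : ∀ h ∈ H, ∀ x, h x ∈ Icc (0 : ℝ) 1)
    (hfS : fS ∈ H) (hfT : fT ∈ H)
    (n : ℕ) (hn : 1 ≤ n) (δ : ℝ) (hδ : δ ∈ Ioo (0 : ℝ) 1) :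
    ENNReal.ofReal (1 - δ) ≤
      ((Measure.pi fun _ : Fin n => DS).prod (Measure.pi fun _ : Fin n => DT))
        {p | ∀ h ∈ H,
          ∫ x, |h x - fT x| ∂DT ≤
            (1 / (n : ℝ)) * ∑ i, |h (p.1 i) - fS (p.1 i)|
              + dH (Htilde H) (empD p.1) (empD p.2)
              + 2 * radS p.1 H + 2 * radS p.1 (Htilde H) + 2 * radS p.2 (Htilde H)
              + min (∫ x, |fS x - fT x| ∂DS) (∫ x, |fS x - fT x| ∂DT)
              + 3 * Real.sqrt (Real.log (4 / δ) / (2 * n))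
              + 6 * Real.sqrt (Real.log (8 / δ) / (2 * n))} := by
  have : NeZero n := ⟨by omega⟩
  refine (stmt_6_general hHcount hmeas hrange hfS hfT hδ).trans
    (measure_mono (ofPred_subset_ofPred.2 fun p hp h hh => ?_))
  linarith [hp h hh, sqrt_log_div_add_le n hδ.1, radS_nonneg hHne hrange p.1,
    radS_nonneg (nonempty_Htilde hHne) mem_Icc_of_mem_Htilde p.1]
end

section
/- Let X and Z be measurable spaces, D_S and D_T probability measures on X, f_S, f_T : X → {0,1} measurable labeling functions, g : X → Z measurable, and h : Z → {0,1} measurable. Let D_S^Z := g_*D_S, D_T^Z := g_*D_T, D_S^Y := (f_S)_*D_S, and D_T^Y := (f_T)_*D_T. If d_JS(D_S^Y, D_T^Y) ≥ d_JS(D_S^Z, D_T^Z), then ε_S(h∘g) + ε_T(h∘g) ≥ (1/2)·( d_JS(D_S^Y, D_T^Y) − d_JS(D_S^Z, D_T^Z) )², where ε_S(h∘g) := E_{x∼D_S}[|h(g(x)) − f_S(x)|] and ε_T(h∘g) := E_{x∼D_T}[|h(g(x)) − f_T(x)|]. -/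
open MeasureTheory
open scoped ENNReal

/-- The Kullback–Leibler divergence `KL(μ‖ν) = ∫ log(dμ/dν) dμ` (real-valued;
this is the correct value whenever `μ ≪ ν`, as is the case below where the
second argument is the midpoint measure). -/
noncomputable def klReal {Ω : Type*} [MeasurableSpace Ω] (μ ν : Measure Ω) : ℝ :=
  ∫ x, llr μ ν x ∂μ

/-- The Jensen–Shannon divergence
`D_JS(μ‖ν) := (1/2)·KL(μ‖m) + (1/2)·KL(ν‖m)` with `m := (μ + ν)/2`. -/
noncomputable def jsDiv {Ω : Type*} [MeasurableSpace Ω] (μ ν : Measure Ω) : ℝ :=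
  (1 / 2) * klReal μ ((2 : ℝ≥0∞)⁻¹ • (μ + ν)) + (1 / 2) * klReal ν ((2 : ℝ≥0∞)⁻¹ • (μ + ν))

/-- The Jensen–Shannon distance `d_JS(μ,ν) := √(D_JS(μ‖ν))`. -/
noncomputable def jsDist {Ω : Type*} [MeasurableSpace Ω] (μ ν : Measure Ω) : ℝ :=
  Real.sqrt (jsDiv μ ν)

/-!
For `x, y ≥ 0` the difference of `t ↦ exp (-x t) / t` and `t ↦ exp (-y t) / t` lies in `L²(0, ∞)`,
and its squared norm is `4 * jsFun x y`, where `jsFun` is the Jensen–Shannon integrand. Hence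
`√(jsFun x y)` satisfies the triangle inequality, and by Minkowski in `L²` of a dominating measure
so does `jsDist`. Since `D_JS` is at most the total variation distance, the images of one measure
under two labelings are at `jsDist` at most the square root of the probability that they disagree.
Passing from `f_S` to `h ∘ g` over `D_S`, then from `D_S` to `D_T` (data processing), then from
`h ∘ g` to `f_T` over `D_T`, gives `d_JS(D_S^Y, D_T^Y) ≤ √ε_S + d_JS(D_S^Z, D_T^Z) + √ε_T`.
-/

section LTwo

variable {α : Type*} [MeasurableSpace α] {μ : Measure α}

lemma ofReal_rpow_half (a : ℝ) :
    ENNReal.ofReal a ^ (1 / 2 : ℝ) = ENNReal.ofReal (√a) := by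
  rcases le_total 0 a with ha | ha
  · rw [ENNReal.ofReal_rpow_of_nonneg ha (by norm_num), Real.sqrt_eq_rpow]
  · rw [ENNReal.ofReal_of_nonpos ha, Real.sqrt_eq_zero_of_nonpos ha]
    simp

lemma sqrt_le_sqrt_add_sqrt_of_lintegral_sq {f g k : α → ℝ≥0∞} {a b c : ℝ}
    (hg : AEMeasurable g μ) (hk : AEMeasurable k μ) (hfgk : ∀ x, f x ≤ g x + k x)
    (ha : ∫⁻ x, f x ^ 2 ∂μ = ENNReal.ofReal a) (hb : ∫⁻ x, g x ^ 2 ∂μ = ENNReal.ofReal b)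
    (hc : ∫⁻ x, k x ^ 2 ∂μ = ENNReal.ofReal c) : √a ≤ √b + √c := by
  have minkowski : (∫⁻ x, f x ^ (2 : ℝ) ∂μ) ^ (1 / 2 : ℝ) ≤
      (∫⁻ x, g x ^ (2 : ℝ) ∂μ) ^ (1 / 2 : ℝ) + (∫⁻ x, k x ^ (2 : ℝ) ∂μ) ^ (1 / 2 : ℝ) := by
    refine le_trans ?_ (ENNReal.lintegral_Lp_add_le hg hk one_le_two)
    gcongr with x
    exact hfgk x
  simp only [ENNReal.rpow_two, ha, hb, hc, ofReal_rpow_half] at minkowski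
  rwa [← ENNReal.ofReal_add (by positivity) (by positivity),
    ENNReal.ofReal_le_ofReal_iff (by positivity)] at minkowski

end LTwo

section LaplaceTransform

lemma setLIntegral_Ioc_ofReal {f : ℝ → ℝ} {x y : ℝ} (hxy : x ≤ y)
    (hf : IntervalIntegrable f volume x y) (hf0 : ∀ s ∈ Set.Ioc x y, 0 ≤ f s) :
    ∫⁻ s in Set.Ioc x y, ENNReal.ofReal (f s) = ENNReal.ofReal (∫ s in x..y, f s) := by
  rw [intervalIntegral.integral_of_le hxy, ofReal_integral_eq_lintegral_ofReal
    ((intervalIntegrable_iff_integrableOn_Ioc_of_le hxy).1 hf)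
    ((ae_restrict_iff' measurableSet_Ioc).2 (.of_forall hf0))]

lemma lintegral_Ioi_exp_neg_mul {c : ℝ} (hc : 0 < c) :
    ∫⁻ t in Set.Ioi (0 : ℝ), ENNReal.ofReal (Real.exp (-c * t)) = ENNReal.ofReal c⁻¹ := by
  rw [← ofReal_integral_eq_lintegral_ofReal (integrableOn_exp_mul_Ioi (by linarith) 0)
    (.of_forall fun t => (Real.exp_pos _).le), integral_exp_mul_Ioi (by linarith)]
  simp

/-- The Laplace transform at `t` of the indicator function of the interval between `x` and `y`.
For `t > 0` it equals `|exp (-t x) - exp (-t y)| / t`. -/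
noncomputable def laplaceUIoc (x y t : ℝ) : ℝ≥0∞ :=
  ∫⁻ s in Set.uIoc x y, ENNReal.ofReal (Real.exp (-s * t))

lemma laplaceUIoc_comm (x y : ℝ) : laplaceUIoc x y = laplaceUIoc y x := by
  unfold laplaceUIoc
  rw [Set.uIoc_comm]

lemma measurable_laplaceUIoc (x y : ℝ) : Measurable (laplaceUIoc x y) :=
  Measurable.lintegral_prod_right'
    (f := fun p : ℝ × ℝ => ENNReal.ofReal (Real.exp (-p.2 * p.1))) (by fun_prop)

lemma laplaceUIoc_le_add (x y z t : ℝ) :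
    laplaceUIoc x z t ≤ laplaceUIoc x y t + laplaceUIoc y z t := by
  have hsub : Set.uIoc x z ⊆ Set.uIoc x y ∪ Set.uIoc y z := by
    intro s
    simp only [Set.mem_union, Set.mem_uIoc]
    grind
  exact (lintegral_mono_set hsub).trans (lintegral_union_le _ _ _)

lemma laplaceUIoc_sq {x y : ℝ} (hxy : x ≤ y) (t : ℝ) :
    laplaceUIoc x y t ^ 2 = ∫⁻ s in Set.Ioc x y, ∫⁻ r in Set.Ioc x y,
      ENNReal.ofReal (Real.exp (-(s + r) * t)) := by
  rw [laplaceUIoc, Set.uIoc_of_le hxy, sq, ← lintegral_mul_const _ (by fun_prop)]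
  congr 1 with s
  rw [← lintegral_const_mul _ (by fun_prop)]
  congr 1 with r
  rw [← ENNReal.ofReal_mul (Real.exp_pos _).le, ← Real.exp_add]
  ring_nf

lemma lintegral_laplaceUIoc_sq_eq_lintegral_inv {x y : ℝ} (hx : 0 ≤ x) (hxy : x ≤ y) :
    ∫⁻ t in Set.Ioi (0 : ℝ), laplaceUIoc x y t ^ 2 =
      ∫⁻ s in Set.Ioc x y, ∫⁻ r in Set.Ioc x y, ENNReal.ofReal (s + r)⁻¹ := by
  have hmeas : Measurable fun p : ℝ × ℝ =>
      ∫⁻ r in Set.Ioc x y, ENNReal.ofReal (Real.exp (-(p.2 + r) * p.1)) :=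
    Measurable.lintegral_prod_right'
      (f := fun p : (ℝ × ℝ) × ℝ => ENNReal.ofReal (Real.exp (-(p.1.2 + p.2) * p.1.1)))
      (by fun_prop)
  simp only [laplaceUIoc_sq hxy]
  rw [lintegral_lintegral_swap hmeas.aemeasurable]
  refine setLIntegral_congr_fun measurableSet_Ioc fun s hs => ?_
  rw [lintegral_lintegral_swap (by fun_prop)]
  refine setLIntegral_congr_fun measurableSet_Ioc fun r hr => ?_
  exact lintegral_Ioi_exp_neg_mul (by linarith [hs.1, hr.1])

lemma setLIntegral_Ioc_inv_add {x y s : ℝ} (hxy : x ≤ y) (hs : 0 < s + x) :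
    ∫⁻ r in Set.Ioc x y, ENNReal.ofReal (s + r)⁻¹ =
      ENNReal.ofReal (Real.log (s + y) - Real.log (s + x)) := by
  have hpos : ∀ r, x ≤ r → 0 < s + r := fun r hr => by linarith
  have hint : IntervalIntegrable (fun r => (s + r)⁻¹) volume x y := by
    refine ContinuousOn.intervalIntegrable (ContinuousOn.inv₀ (by fun_prop) fun r hr => ?_)
    exact (hpos r (Set.uIcc_of_le hxy ▸ hr).1).ne'
  rw [setLIntegral_Ioc_ofReal hxy hint fun r hr => inv_nonneg.2 (hpos r hr.1.le).le,
    intervalIntegral.integral_comp_add_left (fun u => u⁻¹),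
    integral_inv_of_pos hs (hpos y hxy), Real.log_div (hpos y hxy).ne' hs.ne']

end LaplaceTransform

section Scalar

/-- The integrand of `KL(μ‖(μ + ν)/2)`, as a function of the densities `x` of `μ` and `y` of `ν`
with respect to a common dominating measure. -/
noncomputable def klMidpointFun (x y : ℝ) : ℝ :=
  x * (Real.log x - Real.log ((x + y) / 2))

/-- The integrand of the Jensen–Shannon divergence, as a function of the densities `x` and `y`: the
midpoint Jensen gap of `t ↦ t log t`. -/
noncomputable def jsFun (x y : ℝ) : ℝ :=
  (x * Real.log x + y * Real.log y) / 2 - (x + y) / 2 * Real.log ((x + y) / 2)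

lemma jsFun_comm (x y : ℝ) : jsFun x y = jsFun y x := by
  unfold jsFun
  ring_nf

lemma measurable_klMidpointFun : Measurable fun p : ℝ × ℝ => klMidpointFun p.1 p.2 := by
  unfold klMidpointFun
  fun_prop

lemma measurable_jsFun : Measurable fun p : ℝ × ℝ => jsFun p.1 p.2 := by
  unfold jsFun
  fun_prop

lemma jsFun_eq_klMidpointFun_add (x y : ℝ) :
    jsFun x y = 1 / 2 * klMidpointFun x y + 1 / 2 * klMidpointFun y x := by
  rw [jsFun, klMidpointFun, klMidpointFun, add_comm y x]
  ring

lemma jsFun_nonneg {x y : ℝ} (hx : 0 ≤ x) (hy : 0 ≤ y) : 0 ≤ jsFun x y := by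
  have hconv := Real.convexOn_mul_log.2 (Set.mem_Ici.2 hx) (Set.mem_Ici.2 hy)
    (show (0 : ℝ) ≤ 1 / 2 by norm_num) (show (0 : ℝ) ≤ 1 / 2 by norm_num) (by norm_num)
  simp only [smul_eq_mul, one_div_mul_eq_div, ← add_div] at hconv
  unfold jsFun
  linarith

lemma mul_log_sub_log_le {x m : ℝ} (hx : 0 ≤ x) (hm : 0 < m) :
    x * (Real.log x - Real.log m) ≤ x * (x / m - 1) := by
  rcases hx.eq_or_lt with rfl | hx
  · simp
  · rw [← Real.log_div hx.ne' hm.ne']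
    gcongr
    exact Real.log_le_sub_one_of_pos (by positivity)

lemma sub_le_mul_log_sub_log {x m : ℝ} (hx : 0 ≤ x) (hm : 0 < m) :
    x - m ≤ x * (Real.log x - Real.log m) := by
  rcases hx.eq_or_lt with rfl | hx
  · simpa using hm.le
  · calc x - m = x * (1 - (x / m)⁻¹) := by field_simp
      _ ≤ x * (Real.log x - Real.log m) := by
        rw [← Real.log_div hx.ne' hm.ne']
        gcongr
        exact Real.one_sub_inv_le_log_of_pos (by positivity)

lemma abs_klMidpointFun_le {x y : ℝ} (hx : 0 ≤ x) (hy : 0 ≤ y) : |klMidpointFun x y| ≤ x + y := by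
  rcases (add_nonneg hx hy).eq_or_lt with h0 | hpos
  · have : x = 0 := by linarith
    simp [klMidpointFun, this, hy]
  have hm : 0 < (x + y) / 2 := by linarith
  have hratio : x / ((x + y) / 2) ≤ 2 := by
    rw [div_le_iff₀ hm]
    linarith
  have hupper := mul_log_sub_log_le hx hm
  have hlower := sub_le_mul_log_sub_log hx hm
  rw [klMidpointFun]
  exact abs_le.2 ⟨by linarith, by nlinarith⟩

lemma jsFun_le_half_abs_sub {x y : ℝ} (hx : 0 ≤ x) (hy : 0 ≤ y) : jsFun x y ≤ |x - y| / 2 := by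
  rcases (add_nonneg hx hy).eq_or_lt with h0 | hpos
  · obtain ⟨rfl, rfl⟩ : x = 0 ∧ y = 0 := ⟨by linarith, by linarith⟩
    simp [jsFun]
  have hm : 0 < (x + y) / 2 := by linarith
  have habs : |x - y| ≤ x + y := abs_le.2 ⟨by linarith, by linarith⟩
  calc jsFun x y
      ≤ 1 / 2 * (x * (x / ((x + y) / 2) - 1)) + 1 / 2 * (y * (y / ((x + y) / 2) - 1)) := by
        rw [jsFun_eq_klMidpointFun_add, klMidpointFun, klMidpointFun, add_comm y x]
        gcongr 1 / 2 * ?_ + 1 / 2 * ?_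
        exacts [mul_log_sub_log_le hx hm, mul_log_sub_log_le hy hm]
    _ = |x - y| * (|x - y| / (x + y)) / 2 := by
        rw [← mul_div_assoc, abs_mul_abs_self]
        field_simp
        ring
    _ ≤ |x - y| / 2 := by
        gcongr
        exact mul_le_of_le_one_right (abs_nonneg _) (div_le_one_of_le₀ habs hpos.le)

lemma intervalIntegrable_log_add (x y c : ℝ) :
    IntervalIntegrable (fun s => Real.log (s + c)) volume x y := by
  have hlog : IntervalIntegrable Real.log volume (x + c) (y + c) :=
    intervalIntegral.intervalIntegrable_log'
  simpa only [add_sub_cancel_right] using hlog.comp_add_right c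

lemma integral_log_add_sub_log_add (x y : ℝ) :
    ∫ s in x..y, (Real.log (s + y) - Real.log (s + x)) = 4 * jsFun x y := by
  have hlog2 : ∀ z : ℝ, z * Real.log (z / 2) = z * Real.log z - z * Real.log 2 := fun z => by
    rcases eq_or_ne z 0 with rfl | hz
    · simp
    · rw [Real.log_div hz two_ne_zero, mul_sub]
  have hx := hlog2 (x + x)
  have hy := hlog2 (y + y)
  have hxy := hlog2 (x + y)
  rw [add_self_div_two] at hx hy
  rw [intervalIntegral.integral_sub (intervalIntegrable_log_add x y y)
      (intervalIntegrable_log_add x y x),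
    intervalIntegral.integral_comp_add_right Real.log,
    intervalIntegral.integral_comp_add_right Real.log, integral_log, integral_log, add_comm y x,
    jsFun]
  linarith

lemma lintegral_laplaceUIoc_sq {x y : ℝ} (hx : 0 ≤ x) (hy : 0 ≤ y) :
    ∫⁻ t in Set.Ioi (0 : ℝ), laplaceUIoc x y t ^ 2 = ENNReal.ofReal (4 * jsFun x y) := by
  wlog hxy : x ≤ y generalizing x y
  · rw [laplaceUIoc_comm, jsFun_comm, this hy hx (le_of_not_ge hxy)]
  have hint : IntervalIntegrable (fun s => Real.log (s + y) - Real.log (s + x)) volume x y :=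
    (intervalIntegrable_log_add x y y).sub (intervalIntegrable_log_add x y x)
  rw [lintegral_laplaceUIoc_sq_eq_lintegral_inv hx hxy, ← integral_log_add_sub_log_add,
    ← setLIntegral_Ioc_ofReal hxy hint fun s hs => sub_nonneg.2 <|
      Real.log_le_log (by linarith [hs.1]) (by linarith)]
  exact setLIntegral_congr_fun measurableSet_Ioc fun s hs =>
    setLIntegral_Ioc_inv_add hxy (by linarith [hs.1])

lemma sqrt_jsFun_triangle {x y z : ℝ} (hx : 0 ≤ x) (hy : 0 ≤ y) (hz : 0 ≤ z) :
    √(jsFun x z) ≤ √(jsFun x y) + √(jsFun y z) := by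
  have h := sqrt_le_sqrt_add_sqrt_of_lintegral_sq (measurable_laplaceUIoc x y).aemeasurable
    (measurable_laplaceUIoc y z).aemeasurable (laplaceUIoc_le_add x y z)
    (lintegral_laplaceUIoc_sq hx hz) (lintegral_laplaceUIoc_sq hx hy)
    (lintegral_laplaceUIoc_sq hy hz)
  simp only [Real.sqrt_mul zero_le_four, ← mul_add] at h
  exact le_of_mul_le_mul_left h (by positivity)

end Scalar

section Measure

variable {Ω Ω' : Type*} [MeasurableSpace Ω] [MeasurableSpace Ω']

lemma absolutelyContinuous_midpoint (μ ν : Measure Ω) : μ ≪ (2 : ℝ≥0∞)⁻¹ • (μ + ν) :=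
  (Measure.AbsolutelyContinuous.rfl.add_right ν).trans
    (Measure.absolutelyContinuous_smul (by simp))

lemma isFiniteMeasure_midpoint (μ ν : Measure Ω) [IsFiniteMeasure μ] [IsFiniteMeasure ν] :
    IsFiniteMeasure ((2 : ℝ≥0∞)⁻¹ • (μ + ν)) :=
  Measure.smul_finite _ (by simp)

lemma toReal_rnDeriv_midpoint_ae_eq (μ ν ρ : Measure Ω) [IsFiniteMeasure μ] [IsFiniteMeasure ν]
    [SigmaFinite ρ] :
    (fun x => (((2 : ℝ≥0∞)⁻¹ • (μ + ν)).rnDeriv ρ x).toReal) =ᵐ[ρ]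
      fun x => ((μ.rnDeriv ρ x).toReal + (ν.rnDeriv ρ x).toReal) / 2 := by
  filter_upwards [Measure.rnDeriv_smul_left_of_ne_top (μ + ν) ρ (r := 2⁻¹) (by simp),
    Measure.rnDeriv_add μ ν ρ, μ.rnDeriv_lt_top ρ, ν.rnDeriv_lt_top ρ] with x hsmul hadd hμ hν
  rw [hsmul, Pi.smul_apply, hadd, Pi.add_apply, smul_eq_mul, ENNReal.toReal_mul,
    ENNReal.toReal_add hμ.ne hν.ne, ENNReal.toReal_inv, ENNReal.toReal_ofNat, inv_mul_eq_div]

lemma toReal_rnDeriv_mul_llr_ae_eq {μ ν ρ : Measure Ω} [SigmaFinite μ] [SigmaFinite ν]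
    [SigmaFinite ρ] (hμν : μ ≪ ν) :
    (fun x => (μ.rnDeriv ρ x).toReal * llr μ ν x) =ᵐ[ρ] fun x => (μ.rnDeriv ρ x).toReal *
      (Real.log (μ.rnDeriv ρ x).toReal - Real.log (ν.rnDeriv ρ x).toReal) := by
  filter_upwards [Measure.rnDeriv_mul_rnDeriv (κ := ρ) hμν] with x hchain
  have hreal : (μ.rnDeriv ν x).toReal * (ν.rnDeriv ρ x).toReal = (μ.rnDeriv ρ x).toReal := by
    rw [← ENNReal.toReal_mul, ← hchain, Pi.mul_apply]
  rcases eq_or_ne (μ.rnDeriv ρ x).toReal 0 with h0 | h0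
  · simp [h0]
  · have hne := mul_ne_zero_iff.1 (hreal.trans_ne h0)
    rw [← Real.log_div h0 hne.2, ← hreal, mul_div_cancel_right₀ _ hne.2, llr]

section Dominated

variable {μ ν ρ : Measure Ω} [IsFiniteMeasure μ] [IsFiniteMeasure ν]

variable (μ ν ρ) in
lemma integrable_klMidpointFun_rnDeriv :
    Integrable (fun x => klMidpointFun (μ.rnDeriv ρ x).toReal (ν.rnDeriv ρ x).toReal) ρ := by
  have hsum : Integrable (fun x => (μ.rnDeriv ρ x).toReal + (ν.rnDeriv ρ x).toReal) ρ :=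
    Measure.integrable_toReal_rnDeriv.add Measure.integrable_toReal_rnDeriv
  have hmeas : Measurable fun x => ((μ.rnDeriv ρ x).toReal, (ν.rnDeriv ρ x).toReal) := by fun_prop
  refine hsum.mono' (measurable_klMidpointFun.comp hmeas).aestronglyMeasurable
    (.of_forall fun x => ?_)
  exact abs_klMidpointFun_le ENNReal.toReal_nonneg ENNReal.toReal_nonneg

variable (μ ν ρ) in
lemma integrable_jsFun_rnDeriv :
    Integrable (fun x => jsFun (μ.rnDeriv ρ x).toReal (ν.rnDeriv ρ x).toReal) ρ := by
  simp only [jsFun_eq_klMidpointFun_add]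
  exact ((integrable_klMidpointFun_rnDeriv μ ν ρ).const_mul _).add
    ((integrable_klMidpointFun_rnDeriv ν μ ρ).const_mul _)

variable [SigmaFinite ρ]

lemma toReal_rnDeriv_mul_llr_midpoint_ae_eq :
    (fun x => (μ.rnDeriv ρ x).toReal * llr μ ((2 : ℝ≥0∞)⁻¹ • (μ + ν)) x) =ᵐ[ρ]
      fun x => klMidpointFun (μ.rnDeriv ρ x).toReal (ν.rnDeriv ρ x).toReal := by
  have := isFiniteMeasure_midpoint μ ν
  filter_upwards [toReal_rnDeriv_mul_llr_ae_eq (absolutelyContinuous_midpoint μ ν),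
    toReal_rnDeriv_midpoint_ae_eq μ ν ρ] with x hllr hmid
  rw [hllr, hmid, klMidpointFun]

lemma klReal_midpoint_eq_integral (hμ : μ ≪ ρ) :
    klReal μ ((2 : ℝ≥0∞)⁻¹ • (μ + ν)) =
      ∫ x, klMidpointFun (μ.rnDeriv ρ x).toReal (ν.rnDeriv ρ x).toReal ∂ρ := by
  rw [klReal, ← integral_rnDeriv_smul hμ]
  exact integral_congr_ae toReal_rnDeriv_mul_llr_midpoint_ae_eq

lemma jsDiv_eq_integral_jsFun (hμ : μ ≪ ρ) (hν : ν ≪ ρ) :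
    jsDiv μ ν = ∫ x, jsFun (μ.rnDeriv ρ x).toReal (ν.rnDeriv ρ x).toReal ∂ρ := by
  simp only [jsFun_eq_klMidpointFun_add]
  rw [integral_add ((integrable_klMidpointFun_rnDeriv μ ν ρ).const_mul _)
    ((integrable_klMidpointFun_rnDeriv ν μ ρ).const_mul _), integral_const_mul, integral_const_mul,
    ← klReal_midpoint_eq_integral hμ, ← klReal_midpoint_eq_integral hν, add_comm ν μ, jsDiv]

lemma lintegral_sqrt_jsFun_sq (hμ : μ ≪ ρ) (hν : ν ≪ ρ) :
    ∫⁻ x, ENNReal.ofReal √(jsFun (μ.rnDeriv ρ x).toReal (ν.rnDeriv ρ x).toReal) ^ 2 ∂ρ =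
      ENNReal.ofReal (jsDiv μ ν) := by
  have hnonneg : ∀ x, 0 ≤ jsFun (μ.rnDeriv ρ x).toReal (ν.rnDeriv ρ x).toReal := fun x =>
    jsFun_nonneg ENNReal.toReal_nonneg ENNReal.toReal_nonneg
  simp only [← ENNReal.ofReal_pow (Real.sqrt_nonneg _), Real.sq_sqrt (hnonneg _)]
  rw [jsDiv_eq_integral_jsFun hμ hν, ofReal_integral_eq_lintegral_ofReal
    (integrable_jsFun_rnDeriv μ ν ρ) (.of_forall hnonneg)]

end Dominated

lemma jsDist_comm (μ ν : Measure Ω) : jsDist μ ν = jsDist ν μ := by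
  rw [jsDist, jsDist, jsDiv, jsDiv, add_comm ν μ, add_comm (1 / 2 * _)]

variable (μ ν κ : Measure Ω) [IsFiniteMeasure μ] [IsFiniteMeasure ν] [IsFiniteMeasure κ]

lemma jsDist_triangle : jsDist μ κ ≤ jsDist μ ν + jsDist ν κ := by
  let ρ := μ + ν + κ
  have hμ : μ ≪ ρ := (Measure.AbsolutelyContinuous.rfl.add_right ν).add_right κ
  have hν : ν ≪ ρ := (Measure.absolutelyContinuous_of_le (Measure.le_add_left le_rfl)).add_right κ
  have hκ : κ ≪ ρ := Measure.absolutelyContinuous_of_le (Measure.le_add_left le_rfl)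
  have hmeas : ∀ α β : Measure Ω, AEMeasurable (fun x => ENNReal.ofReal
      √(jsFun (α.rnDeriv ρ x).toReal (β.rnDeriv ρ x).toReal)) ρ := fun α β =>
    (measurable_jsFun.comp (by fun_prop : Measurable fun x =>
      ((α.rnDeriv ρ x).toReal, (β.rnDeriv ρ x).toReal))).sqrt.ennreal_ofReal.aemeasurable
  refine sqrt_le_sqrt_add_sqrt_of_lintegral_sq (hmeas μ ν) (hmeas ν κ) (fun x => ?_)
    (lintegral_sqrt_jsFun_sq hμ hκ) (lintegral_sqrt_jsFun_sq hμ hν) (lintegral_sqrt_jsFun_sq hν hκ)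
  rw [← ENNReal.ofReal_add (by positivity) (by positivity)]
  exact ENNReal.ofReal_le_ofReal (sqrt_jsFun_triangle ENNReal.toReal_nonneg ENNReal.toReal_nonneg
    ENNReal.toReal_nonneg)

lemma integrable_llr_midpoint : Integrable (llr μ ((2 : ℝ≥0∞)⁻¹ • (μ + ν))) μ := by
  have := isFiniteMeasure_midpoint μ ν
  rw [← integrable_rnDeriv_smul_iff (absolutelyContinuous_midpoint μ ν)]
  exact (integrable_congr toReal_rnDeriv_mul_llr_midpoint_ae_eq).2
    (integrable_klMidpointFun_rnDeriv μ ν _)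

lemma klDiv_midpoint_ne_top : InformationTheory.klDiv μ ((2 : ℝ≥0∞)⁻¹ • (μ + ν)) ≠ ∞ :=
  InformationTheory.klDiv_ne_top (absolutelyContinuous_midpoint μ ν) (integrable_llr_midpoint μ ν)

lemma toReal_klDiv_midpoint :
    (InformationTheory.klDiv μ ((2 : ℝ≥0∞)⁻¹ • (μ + ν))).toReal =
      klReal μ ((2 : ℝ≥0∞)⁻¹ • (μ + ν)) + (ν.real .univ - μ.real .univ) / 2 := by
  have := isFiniteMeasure_midpoint μ ν
  rw [InformationTheory.toReal_klDiv (absolutelyContinuous_midpoint μ ν)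
    (integrable_llr_midpoint μ ν), klReal, measureReal_ennreal_smul_apply, measureReal_add_apply,
    ENNReal.toReal_inv, ENNReal.toReal_ofNat]
  ring

lemma jsDiv_eq_toReal_klDiv :
    jsDiv μ ν = 1 / 2 * (InformationTheory.klDiv μ ((2 : ℝ≥0∞)⁻¹ • (μ + ν))).toReal +
      1 / 2 * (InformationTheory.klDiv ν ((2 : ℝ≥0∞)⁻¹ • (ν + μ))).toReal := by
  rw [toReal_klDiv_midpoint, toReal_klDiv_midpoint, jsDiv, add_comm ν μ]
  ring

lemma toReal_klDiv_midpoint_map_le {f : Ω → Ω'} (hf : Measurable f) :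
    (InformationTheory.klDiv (μ.map f) ((2 : ℝ≥0∞)⁻¹ • (μ.map f + ν.map f))).toReal ≤
      (InformationTheory.klDiv μ ((2 : ℝ≥0∞)⁻¹ • (μ + ν))).toReal := by
  have := isFiniteMeasure_midpoint μ ν
  rw [← Measure.map_add _ _ hf, ← Measure.map_smul]
  exact ENNReal.toReal_mono (klDiv_midpoint_ne_top μ ν) (InformationTheory.klDiv_map_le _ _ hf)

lemma jsDist_map_le {f : Ω → Ω'} (hf : Measurable f) :
    jsDist (μ.map f) (ν.map f) ≤ jsDist μ ν := by
  refine Real.sqrt_le_sqrt ?_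
  rw [jsDiv_eq_toReal_klDiv, jsDiv_eq_toReal_klDiv]
  gcongr 1 / 2 * ?_ + 1 / 2 * ?_
  exacts [toReal_klDiv_midpoint_map_le μ ν hf, toReal_klDiv_midpoint_map_le ν μ hf]

lemma integral_abs_sub_toReal_rnDeriv_le {μ ν ρ : Measure Ω} [IsFiniteMeasure μ]
    [IsFiniteMeasure ν] [SigmaFinite ρ] (hμ : μ ≪ ρ) (hν : ν ≪ ρ) {c : ℝ}
    (hc : ∀ s, MeasurableSet s → |μ.real s - ν.real s| ≤ c) :
    ∫ x, |(μ.rnDeriv ρ x).toReal - (ν.rnDeriv ρ x).toReal| ∂ρ ≤ 2 * c := by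
  let p := fun x => (μ.rnDeriv ρ x).toReal
  let q := fun x => (ν.rnDeriv ρ x).toReal
  let s := {x | q x ≤ p x}
  have hp : Integrable p ρ := Measure.integrable_toReal_rnDeriv
  have hq : Integrable q ρ := Measure.integrable_toReal_rnDeriv
  have hs : MeasurableSet s := measurableSet_le (by fun_prop) (by fun_prop)
  have hset : ∀ t, ∫ x in t, (p x - q x) ∂ρ = μ.real t - ν.real t := fun t => by
    rw [integral_sub hp.integrableOn hq.integrableOn, Measure.setIntegral_toReal_rnDeriv hμ,
      Measure.setIntegral_toReal_rnDeriv hν]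
  calc ∫ x, |p x - q x| ∂ρ
      = ∫ x in s, |p x - q x| ∂ρ + ∫ x in sᶜ, |p x - q x| ∂ρ :=
        (integral_add_compl hs (hp.sub hq).abs).symm
    _ = ∫ x in s, (p x - q x) ∂ρ + ∫ x in sᶜ, -(p x - q x) ∂ρ := by
        congr 1
        · exact setIntegral_congr_fun hs fun x hx => abs_of_nonneg (sub_nonneg.2 hx)
        · exact setIntegral_congr_fun hs.compl fun x hx =>
            abs_of_nonpos (sub_nonpos.2 (le_of_not_ge hx))
    _ = (μ.real s - ν.real s) - (μ.real sᶜ - ν.real sᶜ) := by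
        rw [integral_neg, hset, hset, sub_eq_add_neg (μ.real s - ν.real s)]
    _ ≤ 2 * c := by linarith [(abs_le.1 (hc s hs)).2, (abs_le.1 (hc _ hs.compl)).1]

lemma jsDiv_le_of_forall_abs_measureReal_sub_le {μ ν : Measure Ω} [IsFiniteMeasure μ]
    [IsFiniteMeasure ν] {c : ℝ} (hc : ∀ s, MeasurableSet s → |μ.real s - ν.real s| ≤ c) :
    jsDiv μ ν ≤ c := by
  let ρ := μ + ν
  have hμ : μ ≪ ρ := Measure.AbsolutelyContinuous.rfl.add_right ν
  have hν : ν ≪ ρ := Measure.absolutelyContinuous_of_le (Measure.le_add_left le_rfl)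
  have hint : Integrable (fun x => |(μ.rnDeriv ρ x).toReal - (ν.rnDeriv ρ x).toReal|) ρ :=
    (Measure.integrable_toReal_rnDeriv.sub Measure.integrable_toReal_rnDeriv).abs
  calc jsDiv μ ν
      = ∫ x, jsFun (μ.rnDeriv ρ x).toReal (ν.rnDeriv ρ x).toReal ∂ρ :=
        jsDiv_eq_integral_jsFun hμ hν
    _ ≤ ∫ x, |(μ.rnDeriv ρ x).toReal - (ν.rnDeriv ρ x).toReal| / 2 ∂ρ :=
        integral_mono (integrable_jsFun_rnDeriv μ ν ρ) (hint.div_const 2) fun x =>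
          jsFun_le_half_abs_sub ENNReal.toReal_nonneg ENNReal.toReal_nonneg
    _ ≤ c := by
        rw [integral_div]
        linarith [integral_abs_sub_toReal_rnDeriv_le hμ hν hc]

lemma measureReal_map_le_add_measureReal_ne {f k : Ω → Ω'} (hf : Measurable f)
    (hk : Measurable k) {s : Set Ω'} (hs : MeasurableSet s) :
    (μ.map f).real s ≤ (μ.map k).real s + μ.real {x | f x ≠ k x} := by
  rw [map_measureReal_apply hf hs, map_measureReal_apply hk hs]
  refine (measureReal_mono ?_).trans (measureReal_union_le _ _)
  intro x hx
  by_cases hfk : f x = k x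
  · exact .inl (by rwa [Set.mem_preimage, ← hfk])
  · exact .inr hfk

lemma jsDist_map_map_le_sqrt_measureReal_ne {f k : Ω → Ω'} (hf : Measurable f)
    (hk : Measurable k) : jsDist (μ.map f) (μ.map k) ≤ √(μ.real {x | f x ≠ k x}) := by
  refine Real.sqrt_le_sqrt (jsDiv_le_of_forall_abs_measureReal_sub_le fun s hs => ?_)
  have hfk := measureReal_map_le_add_measureReal_ne μ hf hk hs
  have hkf := measureReal_map_le_add_measureReal_ne μ hk hf hs
  simp only [ne_comm (a := k _)] at hkf
  exact abs_le.2 ⟨by linarith, by linarith⟩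

end Measure

section Labelings

lemma integral_abs_sub_eq_measureReal_ne {Ω : Type*} [MeasurableSpace Ω] (μ : Measure Ω)
    {f k : Ω → ℝ} (hf : Measurable f) (hk : Measurable k)
    (hf01 : ∀ x, f x = 0 ∨ f x = 1) (hk01 : ∀ x, k x = 0 ∨ k x = 1) :
    ∫ x, |f x - k x| ∂μ = μ.real {x | f x ≠ k x} := by
  have hne : MeasurableSet {x | f x ≠ k x} := (measurableSet_eq_fun hf hk).compl
  rw [← integral_indicator_one hne]
  congr 1 with x
  rcases hf01 x with h | h <;> rcases hk01 x with h' | h' <;> simp [Set.indicator, h, h']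

variable {X Y Z : Type*} [MeasurableSpace X] [MeasurableSpace Y] [MeasurableSpace Z]
  (DS DT : Measure X) [IsFiniteMeasure DS] [IsFiniteMeasure DT]
  {fS fT : X → Y} {g : X → Z} {h : Z → Y}

theorem jsDist_map_le_jsDist_map_add_sqrt_measureReal_ne (hfS : Measurable fS)
    (hfT : Measurable fT) (hg : Measurable g) (hh : Measurable h) :
    jsDist (DS.map fS) (DT.map fT) ≤ jsDist (DS.map g) (DT.map g) +
      (√(DS.real {x | h (g x) ≠ fS x}) + √(DT.real {x | h (g x) ≠ fT x})) := by
  have hhg : Measurable fun x => h (g x) := hh.comp hg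
  let DS' := DS.map fun x => h (g x)
  let DT' := DT.map fun x => h (g x)
  have hS : jsDist DS' (DS.map fS) ≤ √(DS.real {x | h (g x) ≠ fS x}) :=
    jsDist_map_map_le_sqrt_measureReal_ne DS hhg hfS
  have hT : jsDist DT' (DT.map fT) ≤ √(DT.real {x | h (g x) ≠ fT x}) :=
    jsDist_map_map_le_sqrt_measureReal_ne DT hhg hfT
  have hprocessing : jsDist DS' DT' ≤ jsDist (DS.map g) (DT.map g) := by
    have hmap := jsDist_map_le (DS.map g) (DT.map g) hh
    rwa [Measure.map_map hh hg, Measure.map_map hh hg] at hmap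
  calc jsDist (DS.map fS) (DT.map fT)
      ≤ jsDist (DS.map fS) DS' + jsDist DS' (DT.map fT) := jsDist_triangle _ _ _
    _ ≤ jsDist (DS.map fS) DS' + (jsDist DS' DT' + jsDist DT' (DT.map fT)) := by
        gcongr
        exact jsDist_triangle _ _ _
    _ ≤ jsDist (DS.map g) (DT.map g) +
          (√(DS.real {x | h (g x) ≠ fS x}) + √(DT.real {x | h (g x) ≠ fT x})) := by
        rw [jsDist_comm (DS.map fS)]
        linarith

theorem stmt_10_general (hfS : Measurable fS) (hfT : Measurable fT) (hg : Measurable g)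
    (hh : Measurable h) (hge : jsDist (DS.map g) (DT.map g) ≤ jsDist (DS.map fS) (DT.map fT)) :
    1 / 2 * (jsDist (DS.map fS) (DT.map fT) - jsDist (DS.map g) (DT.map g)) ^ 2 ≤
      DS.real {x | h (g x) ≠ fS x} + DT.real {x | h (g x) ≠ fT x} := by
  set εS := DS.real {x | h (g x) ≠ fS x}
  set εT := DT.real {x | h (g x) ≠ fT x}
  have hgap : jsDist (DS.map fS) (DT.map fT) - jsDist (DS.map g) (DT.map g) ≤ √εS + √εT :=
    sub_le_iff_le_add'.2 (jsDist_map_le_jsDist_map_add_sqrt_measureReal_ne DS DT hfS hfT hg hh)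
  calc 1 / 2 * (jsDist (DS.map fS) (DT.map fT) - jsDist (DS.map g) (DT.map g)) ^ 2
      ≤ 1 / 2 * (√εS + √εT) ^ 2 := by
        have := sub_nonneg.2 hge
        gcongr
    _ ≤ 1 / 2 * (2 * (√εS ^ 2 + √εT ^ 2)) := by
        gcongr
        exact add_sq_le
    _ = εS + εT := by
        rw [Real.sq_sqrt measureReal_nonneg, Real.sq_sqrt measureReal_nonneg]
        ring

end Labelings

theorem stmt_10 {X Z : Type*} [MeasurableSpace X] [MeasurableSpace Z]
    (DS DT : Measure X) [IsProbabilityMeasure DS] [IsProbabilityMeasure DT]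
    (fS fT : X → ℝ) (hfS : Measurable fS) (hfT : Measurable fT)
    (hfSr : ∀ x, fS x = 0 ∨ fS x = 1) (hfTr : ∀ x, fT x = 0 ∨ fT x = 1)
    (g : X → Z) (hg : Measurable g)
    (h : Z → ℝ) (hh : Measurable h) (hhr : ∀ z, h z = 0 ∨ h z = 1)
    (hge : jsDist (Measure.map g DS) (Measure.map g DT) ≤
      jsDist (Measure.map fS DS) (Measure.map fT DT)) :
    (1 / 2) * (jsDist (Measure.map fS DS) (Measure.map fT DT) -
        jsDist (Measure.map g DS) (Measure.map g DT)) ^ 2 ≤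
      (∫ x, |h (g x) - fS x| ∂DS) + ∫ x, |h (g x) - fT x| ∂DT := by
  have hhg : Measurable fun x => h (g x) := hh.comp hg
  rw [integral_abs_sub_eq_measureReal_ne DS hhg hfS (fun x => hhr (g x)) hfSr,
    integral_abs_sub_eq_measureReal_ne DT hhg hfT (fun x => hhr (g x)) hfTr]
  exact stmt_10_general DS DT hfS hfT hg hh hge
end
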